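/- arXiv:1904.09528 — 2 statements merged into one kernel-verified Lean document; each statement's English description precedes it below -/
import Mathlib

section
/- For every θ ∈ (0,1) there is a constant C_θ > 0 depending only on θ, and there is a universal constant C > 0, with the following property. Let Y, λ, S, μ, M₀, F_Y be as in the context, with Y satisfying the well-stretched condition with constant λ > 0 and ‖Y‖_{Ḣ^{2+θ}(𝕋)} < ∞. Then F_Y ∈ L²(𝕋) with ‖F_Y‖_{L²(𝕋)} ≤ C μ ‖Y‖_{Ḣ²(𝕋)}, and ‖F_Y‖_{Ḣ^θ(𝕋)} ≤ C_θ μ ‖Y‖_{Ḣ^{2+θ}(𝕋)}. -/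
open MeasureTheory Real Filter Topology
open scoped RealInnerProductSpace ENNReal

noncomputable section

abbrev E2 : Type := EuclideanSpace ℝ (Fin 2)

/-- Squared modulus of the `k`-th Fourier coefficient
`ĝ_k = ∫_{-π}^{π} g(s) e^{-iks} ds` (componentwise complexified). -/
def coefSq (g : ℝ → E2) (k : ℤ) : ℝ :=
  ∑ j : Fin 2,
    Complex.normSq (∫ s in (-π)..π, (g s j : ℂ) * Complex.exp (-Complex.I * (k : ℂ) * (s : ℂ)))

/-- Summand of the homogeneous Sobolev seminorm: `|k|^{2σ} |ĝ_k|²` for `k ≠ 0`. -/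
def sobSummand (σ : ℝ) (g : ℝ → E2) (k : ℤ) : ℝ :=
  if k = 0 then 0 else (|k| : ℝ) ^ (2 * σ) * coefSq g k

/-- The homogeneous Sobolev seminorm `‖g‖_{Ḣ^σ(𝕋)} = (Σ_{k≠0} |k|^{2σ} |ĝ_k|²)^{1/2}`. -/
def sobNorm (σ : ℝ) (g : ℝ → E2) : ℝ := Real.sqrt (∑' k : ℤ, sobSummand σ g k)

/-- The `L²(𝕋)` norm. -/
def normL2v (g : ℝ → E2) : ℝ := Real.sqrt (∫ s in (-π)..π, ‖g s‖ ^ 2)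

/-- The `L^∞(𝕋)` norm. -/
def normLinf (g : ℝ → E2) : ℝ := ⨆ s : ℝ, ‖g s‖

/-
Put `f = Y'` and `g = Y''`. Expanding the derivative gives `F = Sₛ(|f|, s) f + A(s) g`, where the
operator `A = S(|f|, s) + Sₚ(|f|, s) f ⊗ f / |f|` is bounded by `μ` and has increments
`|A(s + h) - A(s)| ≤ 5 μ (h + |f(s + h) - f(s)| / M₀)`. The `L²` bound is then the Poincaré
inequality for `f` and `g`.

For the fractional bound, write the `Ḣ^θ` seminorm in Gagliardo form, with the square of the
increment `u(t + h) - u(t)` integrated against `h ^ (-1 - 2θ) dh`. The delicate term is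
`|g(t)|² ∫ |f(t + h) - f(t)|² h ^ (-1 - 2θ) dh`, to be controlled by `M₀²` times the Gagliardo
density of `g` at `t`. This holds pointwise in `t`: Taylor's formula `f(t + h) ≈ f(t) + h g(t)` and
`|f| ≤ M₀` force `r |g(t)| ≲ M₀ + r ^ (1 + θ) D(t) ^ (1 / 2)` at every scale `r`, where `D` is the
density of `g`, and the optimal `r` interpolates between the two bounds on the increments of `f`.
-/

section GagliardoMeasure

/-- The measure `h ^ (-1 - 2θ) dh` on `(0, ∞)`, against which the squared increments of a function
are integrated to form its Gagliardo energy of order `θ`. -/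
def gagliardoMeasure (θ : ℝ) : Measure ℝ :=
  (volume.restrict (Set.Ioi 0)).withDensity fun h => ENNReal.ofReal (h ^ (-1 - 2 * θ))

instance (θ : ℝ) : SFinite (gagliardoMeasure θ) :=
  inferInstanceAs (SFinite (Measure.withDensity _ _))

theorem measurable_ofReal_rpow_const (p : ℝ) :
    Measurable fun h : ℝ => ENNReal.ofReal (h ^ p) :=
  (measurable_id.pow_const p).ennreal_ofReal

theorem gagliardoMeasure_absolutelyContinuous (θ : ℝ) : gagliardoMeasure θ ≪ volume :=
  (withDensity_absolutelyContinuous _ _).trans Measure.restrict_le_self.absolutelyContinuous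

theorem ae_gagliardoMeasure_pos (θ : ℝ) : ∀ᵐ h ∂gagliardoMeasure θ, 0 < h :=
  (withDensity_absolutelyContinuous _ _).ae_le (ae_restrict_mem measurableSet_Ioi)

theorem lintegral_gagliardoMeasure (θ : ℝ) (φ : ℝ → ℝ≥0∞) :
    ∫⁻ h, φ h ∂gagliardoMeasure θ
      = ∫⁻ h in Set.Ioi 0, ENNReal.ofReal (h ^ (-1 - 2 * θ)) * φ h :=
  lintegral_withDensity_eq_lintegral_mul_non_measurable _ (measurable_ofReal_rpow_const _)
    (Eventually.of_forall fun _ => ENNReal.ofReal_lt_top) φ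

theorem lintegral_gagliardoMeasure_comp_mul_left (θ : ℝ) {c : ℝ} (hc : 0 < c) (φ : ℝ → ℝ≥0∞) :
    ∫⁻ h, φ (c * h) ∂gagliardoMeasure θ
      = ENNReal.ofReal (c ^ (2 * θ)) * ∫⁻ h, φ h ∂gagliardoMeasure θ := by
  have image_Ioi : (fun h => c * h) '' Set.Ioi 0 = Set.Ioi 0 := by
    simpa using Set.image_mul_left_Ioi hc 0
  have change_of_variables := lintegral_image_eq_lintegral_abs_deriv_mul measurableSet_Ioi
    (fun h _ => by simpa using (hasDerivWithinAt_id h (Set.Ioi 0)).const_mul c)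
    (mul_right_injective₀ hc.ne').injOn
    (fun h => ENNReal.ofReal (h ^ (-1 - 2 * θ)) * φ h)
  rw [lintegral_gagliardoMeasure, lintegral_gagliardoMeasure, ← image_Ioi, change_of_variables,
    image_Ioi, ← lintegral_const_mul' _ _ ENNReal.ofReal_ne_top]
  refine setLIntegral_congr_fun measurableSet_Ioi fun h (hh : 0 < h) => ?_
  have weight_scaling : h ^ (-1 - 2 * θ) = c ^ (2 * θ) * (c * (c * h) ^ (-1 - 2 * θ)) := by
    have cancel : c ^ (2 * θ) * c ^ (1 : ℝ) * c ^ (-1 - 2 * θ) = 1 := by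
      rw [← rpow_add hc, ← rpow_add hc, ← rpow_zero c]
      congr 1
      ring
    rw [rpow_one] at cancel
    rw [mul_rpow hc.le hh.le]
    linear_combination -h ^ (-1 - 2 * θ) * cancel
  simp only [abs_of_pos hc]
  rw [weight_scaling, ENNReal.ofReal_mul (by positivity), ENNReal.ofReal_mul hc.le]
  ring

/-- The integral of `min 1 h ^ 2` against `gagliardoMeasure θ`. -/
def truncationConst (θ : ℝ) : ℝ≥0∞ := ∫⁻ h, ENNReal.ofReal (min 1 h ^ 2) ∂gagliardoMeasure θ

/-- The integral of `|e ^ (ih) - 1| ^ 2 = 2 - 2 cos h` against `gagliardoMeasure θ`, which is the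
ratio between `2π` times the Gagliardo energy and the squared `Ḣ^θ` seminorm. -/
def cosineConst (θ : ℝ) : ℝ≥0∞ := ∫⁻ h, ENNReal.ofReal (2 - 2 * cos h) ∂gagliardoMeasure θ

theorem truncationConst_ne_top {θ : ℝ} (hθ0 : 0 < θ) (hθ1 : θ < 1) : truncationConst θ ≠ ∞ := by
  have near : IntegrableOn (fun h : ℝ => h ^ (1 - 2 * θ)) (Set.Ioc 0 1) :=
    (intervalIntegrable_iff_integrableOn_Ioc_of_le zero_le_one).1
      (intervalIntegral.intervalIntegrable_rpow' (by linarith))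
  have far : IntegrableOn (fun h : ℝ => h ^ (-1 - 2 * θ)) (Set.Ioi 1) :=
    integrableOn_Ioi_rpow_of_lt (by linarith) one_pos
  rw [truncationConst, lintegral_gagliardoMeasure, ← Set.Ioc_union_Ioi_eq_Ioi zero_le_one,
    ← lt_top_iff_ne_top]
  refine (lintegral_union_le _ _ _).trans_lt (ENNReal.add_lt_top.2 ⟨?_, ?_⟩)
  · refine (setLIntegral_mono' measurableSet_Ioc fun h hh => ?_).trans_lt near.2
    rw [min_eq_right hh.2, ← ENNReal.ofReal_mul (rpow_nonneg hh.1.le _), ← rpow_natCast,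
      ← rpow_add hh.1, ← ofReal_norm]
    refine ENNReal.ofReal_le_ofReal ((le_of_eq ?_).trans (le_abs_self _))
    congr 1
    push_cast
    ring
  · refine (setLIntegral_mono' measurableSet_Ioi fun h (hh : 1 < h) => ?_).trans_lt far.2
    rw [min_eq_left hh.le, one_pow, ENNReal.ofReal_one, mul_one, ← ofReal_norm]
    exact ENNReal.ofReal_le_ofReal (le_abs_self _)

theorem two_sub_two_mul_cos_le (h : ℝ) : 2 - 2 * cos h ≤ 4 * min 1 h ^ 2 := by
  rcases le_total 1 h with h1 | h1
  · rw [min_eq_left h1]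
    linarith [neg_one_le_cos h]
  · rw [min_eq_right h1]
    nlinarith [one_sub_sq_div_two_le_cos (x := h)]

theorem cosineConst_ne_top {θ : ℝ} (hθ0 : 0 < θ) (hθ1 : θ < 1) : cosineConst θ ≠ ∞ := by
  have le_truncation : cosineConst θ ≤ ENNReal.ofReal 4 * truncationConst θ := by
    rw [cosineConst, truncationConst, ← lintegral_const_mul' _ _ ENNReal.ofReal_ne_top]
    refine lintegral_mono fun h => ?_
    rw [← ENNReal.ofReal_mul (by norm_num)]
    exact ENNReal.ofReal_le_ofReal (two_sub_two_mul_cos_le h)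
  exact ne_top_of_le_ne_top
    (ENNReal.mul_ne_top ENNReal.ofReal_ne_top (truncationConst_ne_top hθ0 hθ1)) le_truncation

theorem cosineConst_ne_zero (θ : ℝ) : cosineConst θ ≠ 0 := by
  have measurable_integrand : Measurable fun h : ℝ =>
      ENNReal.ofReal (h ^ (-1 - 2 * θ)) * ENNReal.ofReal (2 - 2 * cos h) :=
    (measurable_ofReal_rpow_const _).mul (by fun_prop)
  rw [cosineConst, lintegral_gagliardoMeasure, ← pos_iff_ne_zero,
    setLIntegral_pos_iff measurable_integrand]
  refine lt_of_lt_of_le ?_ (measure_mono (μ := volume) (s := Set.Ioo (0 : ℝ) 1) ?_)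
  · simp
  · intro h hh
    have cos_lt : cos h < 1 := by
      simpa using cos_lt_cos_of_nonneg_of_le_pi le_rfl (by linarith [hh.2, pi_gt_three]) hh.1
    have weight_pos : 0 < h ^ (-1 - 2 * θ) := rpow_pos_of_pos hh.1 _
    refine ⟨mul_ne_zero ?_ ?_, hh.1⟩
    · simpa using weight_pos
    · simpa using cos_lt

theorem lintegral_gagliardoMeasure_cos_int_mul (θ : ℝ) {k : ℤ} (hk : k ≠ 0) :
    ∫⁻ h, ENNReal.ofReal (2 - 2 * cos (k * h)) ∂gagliardoMeasure θ
      = ENNReal.ofReal ((|k| : ℝ) ^ (2 * θ)) * cosineConst θ := by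
  have abs_pos : 0 < |(k : ℝ)| := abs_pos.2 (by exact_mod_cast hk)
  rw [cosineConst, ← lintegral_gagliardoMeasure_comp_mul_left θ abs_pos]
  refine lintegral_congr fun h => ?_
  rw [← cos_abs (k * h), ← cos_abs (|(k : ℝ)| * h), abs_mul, abs_mul, abs_abs]

end GagliardoMeasure

section IsPrimitive

variable {V : Type*} [NormedAddCommGroup V] [NormedSpace ℝ V] {f g : ℝ → V} {T : ℝ}

/-- `f` is a primitive of the locally integrable function `g`; equivalently, `f` is locally
absolutely continuous with almost everywhere derivative `g`. -/
structure IsPrimitive (f g : ℝ → V) : Prop where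
  locallyIntegrable : LocallyIntegrable g volume
  sub_eq_integral : ∀ a b : ℝ, a ≤ b → f b - f a = ∫ u in a..b, g u

theorem IsPrimitive.intervalIntegrable (hfg : IsPrimitive f g) (a b : ℝ) :
    IntervalIntegrable g volume a b :=
  intervalIntegrable_iff.mpr <|
    (hfg.locallyIntegrable.integrableOn_isCompact isCompact_uIcc).mono_set Set.uIoc_subset_uIcc

theorem IsPrimitive.congr {g' : ℝ → V} (hfg : IsPrimitive f g) (h : g =ᵐ[volume] g') :
    IsPrimitive f g' where
  locallyIntegrable x := (hfg.locallyIntegrable x).congr h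
  sub_eq_integral a b hab := by
    rw [hfg.sub_eq_integral a b hab]
    exact intervalIntegral.integral_congr_ae (h.mono fun _ hx _ => hx)

theorem IsPrimitive.ae_hasDerivAt [CompleteSpace V] (hfg : IsPrimitive f g) :
    ∀ᵐ t, HasDerivAt f (g t) t := by
  filter_upwards [LocallyIntegrable.ae_hasDerivAt_integral hfg.locallyIntegrable] with t ht
  refine ((ht (t - 1)).const_add (f (t - 1))).congr_of_eventuallyEq ?_
  filter_upwards [Ioi_mem_nhds (sub_one_lt t)] with x hx
  rw [← hfg.sub_eq_integral _ _ (le_of_lt hx), add_sub_cancel]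

theorem IsPrimitive.deriv [CompleteSpace V] (hfg : IsPrimitive f g) : IsPrimitive f (deriv f) :=
  hfg.congr (hfg.ae_hasDerivAt.mono fun _ ht => ht.deriv.symm)

theorem isPrimitive_of_hasDerivAt [CompleteSpace V] (hf : ∀ t, HasDerivAt f (g t) t)
    (hg : Continuous g) : IsPrimitive f g where
  locallyIntegrable := hg.locallyIntegrable
  sub_eq_integral a b _ := (intervalIntegral.integral_eq_sub_of_hasDerivAt (fun t _ => hf t)
    (hg.intervalIntegrable a b)).symm

theorem periodic_deriv (hf : Function.Periodic f T) : Function.Periodic (deriv f) T := fun t => by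
  rw [← deriv_comp_add_const, funext hf]

theorem periodic_of_hasDerivAt (hf : Function.Periodic f T) (hfg : ∀ t, HasDerivAt f (g t) t) :
    Function.Periodic g T :=
  deriv_eq hfg ▸ periodic_deriv hf

end IsPrimitive

section GagliardoDensity

variable {V : Type*} [NormedAddCommGroup V] {θ t : ℝ} {u v : ℝ → V}

theorem enorm_sq_eq_ofReal_norm_sq (x : V) : ‖x‖ₑ ^ 2 = ENNReal.ofReal (‖x‖ ^ 2) := by
  rw [ENNReal.ofReal_pow (norm_nonneg x), ofReal_norm]

/-- The inner integral `∫ ‖u (t + h) - u t‖² h ^ (-1 - 2θ) dh` over `h > 0` in the Gagliardo energy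
of order `θ`. -/
def gagliardoDensity (θ : ℝ) (u : ℝ → V) (t : ℝ) : ℝ≥0∞ :=
  ∫⁻ h, ‖u (t + h) - u t‖ₑ ^ 2 ∂gagliardoMeasure θ

theorem measurable_enorm_increment_sq (hu : StronglyMeasurable u) :
    Measurable fun p : ℝ × ℝ => ‖u (p.1 + p.2) - u p.1‖ₑ ^ 2 :=
  ((hu.comp_measurable (measurable_fst.add measurable_snd)).sub
    (hu.comp_measurable measurable_fst)).enorm.pow_const 2

theorem measurable_gagliardoDensity (hu : StronglyMeasurable u) :
    Measurable (gagliardoDensity θ u) :=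
  (measurable_enorm_increment_sq hu).lintegral_prod_right'

theorem gagliardoDensity_congr (huv : u =ᵐ[volume] v) (ht : u t = v t) :
    gagliardoDensity θ u t = gagliardoDensity θ v t := by
  have shifted : ∀ᵐ h ∂gagliardoMeasure θ, u (t + h) = v (t + h) :=
    (gagliardoMeasure_absolutelyContinuous θ).ae_le
      ((measurePreserving_add_left volume t).quasiMeasurePreserving.ae huv)
  refine lintegral_congr_ae (shifted.mono fun h hh => ?_)
  simp only [hh, ht]

theorem enorm_add_sq_le (x y : V) : ‖x + y‖ₑ ^ 2 ≤ 2 * (‖x‖ₑ ^ 2 + ‖y‖ₑ ^ 2) := by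
  have norm_sq_le : ‖x + y‖ ^ 2 ≤ 2 * (‖x‖ ^ 2 + ‖y‖ ^ 2) :=
    (pow_le_pow_left₀ (norm_nonneg _) (norm_add_le x y) 2).trans add_sq_le
  simp only [enorm_sq_eq_ofReal_norm_sq]
  rw [← ENNReal.ofReal_add (sq_nonneg _) (sq_nonneg _),
    show (2 : ℝ≥0∞) = ENNReal.ofReal 2 by norm_num, ← ENNReal.ofReal_mul zero_le_two]
  exact ENNReal.ofReal_le_ofReal norm_sq_le

theorem gagliardoDensity_add_le (hu : StronglyMeasurable u) :
    gagliardoDensity θ (fun s => u s + v s) t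
      ≤ 2 * (gagliardoDensity θ u t + gagliardoDensity θ v t) := by
  have measurable_increment : Measurable fun h => ‖u (t + h) - u t‖ₑ ^ 2 :=
    (measurable_enorm_increment_sq hu).comp measurable_prodMk_left
  rw [gagliardoDensity, gagliardoDensity, gagliardoDensity,
    ← lintegral_add_left measurable_increment,
    ← lintegral_const_mul' _ _ ENNReal.ofNat_ne_top]
  refine lintegral_mono fun h => ?_
  simpa only [add_sub_add_comm] using enorm_add_sq_le (u (t + h) - u t) (v (t + h) - v t)

theorem setLIntegral_increment_sq_le_gagliardoDensity {h : ℝ} (hθ : 0 ≤ 1 + 2 * θ) :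
    ∫⁻ s in Set.Ioc 0 h, ‖u (t + s) - u t‖ₑ ^ 2
      ≤ ENNReal.ofReal (h ^ (1 + 2 * θ)) * gagliardoDensity θ u t := by
  rw [gagliardoDensity, lintegral_gagliardoMeasure,
    ← lintegral_const_mul' _ _ ENNReal.ofReal_ne_top]
  refine (setLIntegral_mono' measurableSet_Ioc fun s hs => ?_).trans
    (lintegral_mono_set Set.Ioc_subset_Ioi_self)
  have one_le_weight : 1 ≤ h ^ (1 + 2 * θ) * s ^ (-1 - 2 * θ) := by
    rw [show -1 - 2 * θ = -(1 + 2 * θ) by ring, rpow_neg hs.1.le, ← div_eq_mul_inv,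
      one_le_div (rpow_pos_of_pos hs.1 _)]
    exact rpow_le_rpow hs.1.le hs.2 hθ
  rw [← mul_assoc, ← ENNReal.ofReal_mul (rpow_nonneg (hs.1.le.trans hs.2) _)]
  exact le_mul_of_one_le_left' (ENNReal.one_le_ofReal.2 one_le_weight)

theorem gagliardoDensity_le_of_norm_le_min {K r : ℝ} (hr : 0 < r)
    (hu : ∀ h > 0, ‖u (t + h) - u t‖ ≤ K * min 1 (r⁻¹ * h)) :
    gagliardoDensity θ u t ≤ ENNReal.ofReal (K ^ 2 * r⁻¹ ^ (2 * θ)) * truncationConst θ := by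
  rw [ENNReal.ofReal_mul (sq_nonneg K), mul_assoc, truncationConst,
    ← lintegral_gagliardoMeasure_comp_mul_left θ (inv_pos.2 hr)
      (fun h => ENNReal.ofReal (min 1 h ^ 2)),
    ← lintegral_const_mul' _ _ ENNReal.ofReal_ne_top]
  refine lintegral_mono_ae ((ae_gagliardoMeasure_pos θ).mono fun h hh => ?_)
  rw [enorm_sq_eq_ofReal_norm_sq, ← ENNReal.ofReal_mul (sq_nonneg K), ← mul_pow]
  exact ENNReal.ofReal_le_ofReal (pow_le_pow_left₀ (norm_nonneg _) (hu h hh) 2)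

end GagliardoDensity

section Interpolation

variable {V : Type*} [NormedAddCommGroup V] [NormedSpace ℝ V] {f g δ : ℝ → V} {v : V}
  {θ t h M γ r : ℝ}

theorem sq_lintegral_le_measure_univ_mul {α : Type*} [MeasurableSpace α] {m : Measure α}
    {φ : α → ℝ≥0∞} (hφ : AEMeasurable φ m) :
    (∫⁻ a, φ a ∂m) ^ 2 ≤ m Set.univ * ∫⁻ a, φ a ^ 2 ∂m := by
  have holder := ENNReal.lintegral_mul_le_Lp_mul_Lq m (Real.HolderConjugate.two_two)
    aemeasurable_const (f := fun _ => 1) hφ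
  simp only [Pi.mul_apply, one_mul, ENNReal.rpow_two, one_pow, lintegral_one] at holder
  refine (pow_le_pow_left₀ zero_le holder 2).trans_eq ?_
  rw [mul_pow, ← ENNReal.rpow_mul_natCast, ← ENNReal.rpow_mul_natCast]
  norm_num

theorem IsPrimitive.enorm_taylor_le [CompleteSpace V] (hfg : IsPrimitive f g) (hh : 0 ≤ h) :
    ‖f (t + h) - f t - h • g t‖ₑ ≤ ∫⁻ s in Set.Ioc 0 h, ‖g (t + s) - g t‖ₑ := by
  have integrable_shift : IntervalIntegrable (fun s => g (t + s)) volume 0 h := by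
    simpa using (hfg.intervalIntegrable t (t + h)).comp_add_left t
  have remainder : f (t + h) - f t - h • g t = ∫ s in Set.Ioc 0 h, (g (t + s) - g t) := by
    rw [← intervalIntegral.integral_of_le hh, intervalIntegral.integral_sub integrable_shift
      intervalIntegrable_const, intervalIntegral.integral_const,
      intervalIntegral.integral_comp_add_left (fun s => g s), add_zero, sub_zero,
      hfg.sub_eq_integral t (t + h) (by linarith)]
  rw [remainder]
  exact enorm_integral_le_lintegral_enorm _

theorem IsPrimitive.enorm_taylor_sq_le [CompleteSpace V] (hfg : IsPrimitive f g)
    (hθ : 0 ≤ 1 + 2 * θ) (hh : 0 < h) :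
    ‖f (t + h) - f t - h • g t‖ₑ ^ 2
      ≤ ENNReal.ofReal (h ^ (2 + 2 * θ)) * gagliardoDensity θ g t := by
  have measurable_shift : AEStronglyMeasurable (fun s => g (t + s)) volume :=
    hfg.locallyIntegrable.aestronglyMeasurable.comp_quasiMeasurePreserving
      (measurePreserving_add_left volume t).quasiMeasurePreserving
  have measurable_increment : AEMeasurable (fun s => ‖g (t + s) - g t‖ₑ)
      (volume.restrict (Set.Ioc 0 h)) :=
    (measurable_shift.sub aestronglyMeasurable_const).restrict.enorm
  calc ‖f (t + h) - f t - h • g t‖ₑ ^ 2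
      ≤ (∫⁻ s in Set.Ioc 0 h, ‖g (t + s) - g t‖ₑ) ^ 2 :=
        pow_le_pow_left₀ zero_le (hfg.enorm_taylor_le hh.le) 2
    _ ≤ volume.restrict (Set.Ioc 0 h) Set.univ
          * ∫⁻ s in Set.Ioc 0 h, ‖g (t + s) - g t‖ₑ ^ 2 :=
        sq_lintegral_le_measure_univ_mul measurable_increment
    _ ≤ ENNReal.ofReal h * (ENNReal.ofReal (h ^ (1 + 2 * θ)) * gagliardoDensity θ g t) := by
        rw [Measure.restrict_apply_univ, Real.volume_Ioc, sub_zero]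
        gcongr
        exact setLIntegral_increment_sq_le_gagliardoDensity hθ
    _ = ENNReal.ofReal (h ^ (2 + 2 * θ)) * gagliardoDensity θ g t := by
        rw [← mul_assoc, ← ENNReal.ofReal_mul hh.le, ← rpow_one_add' hh.le (by linarith)]
        ring_nf

theorem IsPrimitive.norm_taylor_le [CompleteSpace V] (hfg : IsPrimitive f g)
    (hθ : 0 ≤ 1 + 2 * θ) (hg : gagliardoDensity θ g t ≠ ∞) (hh : 0 < h) :
    ‖f (t + h) - f t - h • g t‖ ≤ √(gagliardoDensity θ g t).toReal * h ^ (1 + θ) := by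
  refine (sq_le_sq₀ (norm_nonneg _) (by positivity)).1 ?_
  have sq_le := ENNReal.toReal_mono (ENNReal.mul_ne_top ENNReal.ofReal_ne_top hg)
    (hfg.enorm_taylor_sq_le hθ hh)
  rw [ENNReal.toReal_pow, toReal_enorm, ENNReal.toReal_mul,
    ENNReal.toReal_ofReal (by positivity)] at sq_le
  rwa [mul_pow, sq_sqrt ENNReal.toReal_nonneg, ← rpow_mul_natCast hh.le, mul_comm,
    show (1 + θ) * (2 : ℕ) = 2 + 2 * θ by push_cast; ring]

theorem norm_mul_le_of_norm_sub_smul_le (hr : 0 < r) (hδ : ‖δ r‖ ≤ 2 * M)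
    (hv : ‖δ r - r • v‖ ≤ M) : r * ‖v‖ ≤ 3 * M := by
  have triangle := norm_le_norm_add_norm_sub (δ r) (r • v)
  rw [norm_smul, norm_of_nonneg hr.le] at triangle
  linarith

theorem norm_le_four_mul_min_of_norm_sub_smul_le (hθ : 0 ≤ θ) (hr : 0 < r)
    (hγr : γ * r ^ (1 + θ) = M) (hδ : ∀ h > 0, ‖δ h‖ ≤ 2 * M)
    (hv : ∀ h > 0, ‖δ h - h • v‖ ≤ γ * h ^ (1 + θ)) (hh : 0 < h) :
    ‖δ h‖ ≤ 4 * M * min 1 (r⁻¹ * h) := by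
  have M_nonneg : 0 ≤ M := by linarith [norm_nonneg (δ h), hδ h hh]
  rcases le_total r h with hrh | hhr
  · rw [min_eq_left ((one_le_inv_mul₀ hr).2 hrh)]
    linarith [hδ h hh]
  · have ratio_le : r⁻¹ * h ≤ 1 := (inv_mul_le_one₀ hr).2 hhr
    have linear : h * ‖v‖ ≤ r⁻¹ * h * (3 * M) := by
      have := norm_mul_le_of_norm_sub_smul_le hr (hδ r hr) ((hv r hr).trans_eq hγr)
      calc h * ‖v‖ = r⁻¹ * h * (r * ‖v‖) := by field_simp
        _ ≤ r⁻¹ * h * (3 * M) := by gcongr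
    have remainder : γ * h ^ (1 + θ) ≤ M * (r⁻¹ * h) := by
      have factor : γ * h ^ (1 + θ) = M * (r⁻¹ * h) ^ (1 + θ) := by
        rw [mul_rpow (inv_nonneg.2 hr.le) hh.le, inv_rpow hr.le, ← hγr]
        field_simp
      rw [factor]
      gcongr
      simpa using rpow_le_rpow_of_exponent_ge (by positivity) ratio_le (by linarith : 1 ≤ 1 + θ)
    have triangle := norm_le_norm_add_norm_sub' (δ h) (h • v)
    rw [norm_smul, norm_of_nonneg hh.le] at triangle
    rw [min_eq_right ratio_le]
    linarith [hv h hh]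

theorem gagliardoDensity_mul_enorm_sq_le_of_taylor (hθ : 0 ≤ θ) (hM : 0 < M)
    (hf : ∀ s, ‖f s‖ ≤ M) (hγ : 0 < γ)
    (hv : ∀ h > 0, ‖f (t + h) - f t - h • v‖ ≤ γ * h ^ (1 + θ)) :
    gagliardoDensity θ f t * ‖v‖ₑ ^ 2
      ≤ ENNReal.ofReal (144 * M ^ 2 * γ ^ 2) * truncationConst θ := by
  -- At scale `r` the remainder `γ r ^ (1 + θ)` balances the trivial bound `M` on `f`.
  obtain ⟨r, hr, hγr⟩ : ∃ r > 0, γ * r ^ (1 + θ) = M :=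
    ⟨(M / γ) ^ (1 + θ)⁻¹, by positivity, by
      rw [rpow_inv_rpow (by positivity) (by positivity), mul_div_cancel₀ _ hγ.ne']⟩
  have increment_le : ∀ h > 0, ‖f (t + h) - f t‖ ≤ 2 * M := fun h _ =>
    (norm_sub_le _ _).trans (by linarith [hf (t + h), hf t])
  have density_le : gagliardoDensity θ f t
      ≤ ENNReal.ofReal ((4 * M) ^ 2 * r⁻¹ ^ (2 * θ)) * truncationConst θ :=
    gagliardoDensity_le_of_norm_le_min hr fun h hh =>
      norm_le_four_mul_min_of_norm_sub_smul_le (δ := fun h => f (t + h) - f t)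
        hθ hr hγr increment_le hv hh
  have derivative_le : ‖v‖ ≤ 3 * M * r⁻¹ := by
    rw [← div_eq_mul_inv, le_div_iff₀' hr]
    exact norm_mul_le_of_norm_sub_smul_le (δ := fun h => f (t + h) - f t) hr (increment_le r hr)
      ((hv r hr).trans_eq hγr)
  have scales : r⁻¹ ^ (2 * θ) * r⁻¹ ^ 2 = γ ^ 2 / M ^ 2 := by
    rw [← rpow_natCast, ← rpow_add (inv_pos.2 hr), ← hγr, mul_pow, ← rpow_mul_natCast hr.le,
      inv_rpow hr.le, show 2 * θ + (2 : ℕ) = (1 + θ) * (2 : ℕ) by push_cast; ring]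
    field_simp
  calc gagliardoDensity θ f t * ‖v‖ₑ ^ 2
      ≤ ENNReal.ofReal ((4 * M) ^ 2 * r⁻¹ ^ (2 * θ)) * truncationConst θ
          * ENNReal.ofReal ((3 * M * r⁻¹) ^ 2) := by
        rw [enorm_sq_eq_ofReal_norm_sq]
        gcongr
    _ = ENNReal.ofReal (144 * M ^ 4 * (r⁻¹ ^ (2 * θ) * r⁻¹ ^ 2)) * truncationConst θ := by
        rw [mul_right_comm, ← ENNReal.ofReal_mul (by positivity)]
        ring_nf
    _ = ENNReal.ofReal (144 * M ^ 2 * γ ^ 2) * truncationConst θ := by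
        rw [scales]
        field_simp

theorem eq_zero_of_norm_le_of_taylor_exact (hf : ∀ s, ‖f s‖ ≤ M)
    (hv : ∀ h > 0, ‖f (t + h) - f t - h • v‖ ≤ 0) : v = 0 := by
  by_contra hne
  have v_pos : 0 < ‖v‖ := norm_pos_iff.2 hne
  have M_nonneg : 0 ≤ M := (norm_nonneg _).trans (hf t)
  have h_pos : 0 < (2 * M + 1) / ‖v‖ := by positivity
  have increment_eq := sub_eq_zero.1 (norm_le_zero_iff.1 (hv _ h_pos))
  have norm_increment : ‖f (t + (2 * M + 1) / ‖v‖) - f t‖ = 2 * M + 1 := by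
    rw [increment_eq, norm_smul, norm_of_nonneg h_pos.le, div_mul_cancel₀ _ v_pos.ne']
  linarith [norm_sub_le (f (t + (2 * M + 1) / ‖v‖)) (f t), hf t, hf (t + (2 * M + 1) / ‖v‖)]

theorem IsPrimitive.gagliardoDensity_mul_enorm_sq_le [CompleteSpace V] (hfg : IsPrimitive f g)
    (hθ : 0 ≤ θ) (hM : 0 < M) (hf : ∀ s, ‖f s‖ ≤ M) (hg : gagliardoDensity θ g t ≠ ∞) :
    gagliardoDensity θ f t * ‖g t‖ₑ ^ 2
      ≤ ENNReal.ofReal (144 * M ^ 2) * truncationConst θ * gagliardoDensity θ g t := by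
  have taylor : ∀ h > 0, ‖f (t + h) - f t - h • g t‖
      ≤ √(gagliardoDensity θ g t).toReal * h ^ (1 + θ) := fun h hh =>
    hfg.norm_taylor_le (by linarith) hg hh
  rcases eq_or_ne (gagliardoDensity θ g t) 0 with hzero | hne
  · have g_eq_zero : g t = 0 :=
      eq_zero_of_norm_le_of_taylor_exact hf fun h hh => by simpa [hzero] using taylor h hh
    simp [g_eq_zero]
  · have root_pos : 0 < √(gagliardoDensity θ g t).toReal :=
      sqrt_pos.2 (ENNReal.toReal_pos hne hg)
    refine (gagliardoDensity_mul_enorm_sq_le_of_taylor hθ hM hf root_pos taylor).trans_eq ?_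
    rw [sq_sqrt ENNReal.toReal_nonneg, ENNReal.ofReal_mul (by positivity),
      ENNReal.ofReal_toReal hg, mul_right_comm]

end Interpolation

section OperatorProduct

variable {V W X : Type*} [NormedAddCommGroup V] [NormedSpace ℝ V] [NormedAddCommGroup W]
  [NormedSpace ℝ W] [NormedAddCommGroup X] {θ t K M : ℝ} {A : ℝ → V →L[ℝ] W} {u : ℝ → V}
  {f : ℝ → X}

theorem norm_increment_clm_apply_le (hA : ∀ s, ‖A s‖ ≤ K)
    (hAf : ∀ s, ∀ h > 0, ‖A (s + h) - A s‖ ≤ K * (h + M⁻¹ * ‖f (s + h) - f s‖))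
    (hM : 0 < M) {h : ℝ} (hh : 0 < h) :
    ‖A (t + h) (u (t + h)) - A t (u t)‖
      ≤ K * (‖u (t + h) - u t‖ + 2 * (min 1 h + M⁻¹ * ‖f (t + h) - f t‖) * ‖u t‖) := by
  have K_nonneg : 0 ≤ K := (norm_nonneg _).trans (hA t)
  have increment_nonneg : 0 ≤ M⁻¹ * ‖f (t + h) - f t‖ := by positivity
  have increment_A_le : ‖A (t + h) - A t‖ ≤ K * (2 * (min 1 h + M⁻¹ * ‖f (t + h) - f t‖)) := by
    rcases le_total 1 h with h1 | h1
    · rw [min_eq_left h1]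
      nlinarith [norm_sub_le (A (t + h)) (A t), hA (t + h), hA t]
    · rw [min_eq_right h1]
      exact (hAf t h hh).trans (by gcongr; linarith)
  calc ‖A (t + h) (u (t + h)) - A t (u t)‖
      = ‖A (t + h) (u (t + h) - u t) + (A (t + h) - A t) (u t)‖ := by
        rw [map_sub, sub_apply, sub_add_sub_cancel]
    _ ≤ K * ‖u (t + h) - u t‖ + K * (2 * (min 1 h + M⁻¹ * ‖f (t + h) - f t‖)) * ‖u t‖ :=
        norm_add_le_of_le ((A (t + h)).le_of_opNorm_le (hA _) _)
          ((A (t + h) - A t).le_of_opNorm_le increment_A_le _)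
    _ = _ := by ring

theorem enorm_increment_clm_apply_sq_le (hA : ∀ s, ‖A s‖ ≤ K)
    (hAf : ∀ s, ∀ h > 0, ‖A (s + h) - A s‖ ≤ K * (h + M⁻¹ * ‖f (s + h) - f s‖))
    (hM : 0 < M) {h : ℝ} (hh : 0 < h) :
    ‖A (t + h) (u (t + h)) - A t (u t)‖ₑ ^ 2
      ≤ ENNReal.ofReal (12 * K ^ 2) * (‖u (t + h) - u t‖ₑ ^ 2
        + ENNReal.ofReal (min 1 h ^ 2) * ‖u t‖ₑ ^ 2
        + ENNReal.ofReal (M⁻¹ ^ 2) * ‖u t‖ₑ ^ 2 * ‖f (t + h) - f t‖ₑ ^ 2) := by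
  have square_le (a b c : ℝ) : (a + 2 * (b + c)) ^ 2 ≤ 12 * (a ^ 2 + b ^ 2 + c ^ 2) := by
    nlinarith [sq_nonneg (a - 2 * b), sq_nonneg (a - 2 * c), sq_nonneg (b - c), sq_nonneg a]
  have norm_sq_le : ‖A (t + h) (u (t + h)) - A t (u t)‖ ^ 2
      ≤ 12 * K ^ 2 * (‖u (t + h) - u t‖ ^ 2 + min 1 h ^ 2 * ‖u t‖ ^ 2
        + M⁻¹ ^ 2 * ‖u t‖ ^ 2 * ‖f (t + h) - f t‖ ^ 2) := by
    refine (pow_le_pow_left₀ (norm_nonneg _)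
      (norm_increment_clm_apply_le hA hAf hM hh) 2).trans ?_
    have := mul_le_mul_of_nonneg_left (square_le ‖u (t + h) - u t‖ (min 1 h * ‖u t‖)
      (M⁻¹ * ‖f (t + h) - f t‖ * ‖u t‖)) (sq_nonneg K)
    linarith
  simp only [enorm_sq_eq_ofReal_norm_sq]
  simp only [← ENNReal.ofReal_mul (sq_nonneg _)]
  rw [← ENNReal.ofReal_mul (by positivity), ← ENNReal.ofReal_add (by positivity) (by positivity),
    ← ENNReal.ofReal_add (by positivity) (by positivity), ← ENNReal.ofReal_mul (by positivity)]
  exact ENNReal.ofReal_le_ofReal norm_sq_le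

theorem gagliardoDensity_clm_apply_le (hA : ∀ s, ‖A s‖ ≤ K)
    (hAf : ∀ s, ∀ h > 0, ‖A (s + h) - A s‖ ≤ K * (h + M⁻¹ * ‖f (s + h) - f s‖))
    (hM : 0 < M) (hu : StronglyMeasurable u) :
    gagliardoDensity θ (fun s => A s (u s)) t
      ≤ ENNReal.ofReal (12 * K ^ 2) * (gagliardoDensity θ u t + truncationConst θ * ‖u t‖ₑ ^ 2
        + ENNReal.ofReal (M⁻¹ ^ 2) * ‖u t‖ₑ ^ 2 * gagliardoDensity θ f t) := by
  have measurable_increment : Measurable fun h => ‖u (t + h) - u t‖ₑ ^ 2 :=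
    (measurable_enorm_increment_sq hu).comp measurable_prodMk_left
  have measurable_sum : Measurable fun h =>
      ‖u (t + h) - u t‖ₑ ^ 2 + ENNReal.ofReal (min 1 h ^ 2) * ‖u t‖ₑ ^ 2 :=
    measurable_increment.add (by fun_prop)
  rw [gagliardoDensity, gagliardoDensity, truncationConst, gagliardoDensity,
    ← lintegral_mul_const' _ _ (by simp), ← lintegral_const_mul' _ _ (by finiteness),
    ← lintegral_add_left measurable_increment,
    ← lintegral_add_left measurable_sum,
    ← lintegral_const_mul' _ _ ENNReal.ofReal_ne_top]
  exact lintegral_mono_ae ((ae_gagliardoMeasure_pos θ).mono fun h hh =>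
    enorm_increment_clm_apply_sq_le hA hAf hM hh)

/-- The constant in the product estimates `gagliardoDensity_clm_apply_derivative_le` and
`gagliardoDensity_clm_apply_self_le`. -/
def productConst (θ : ℝ) : ℝ≥0∞ := 2 + 144 * truncationConst θ

theorem truncationConst_le_productConst (θ : ℝ) : truncationConst θ ≤ productConst θ := by
  refine le_add_left ?_
  exact le_mul_of_one_le_left' (by norm_num)

theorem productConst_ne_zero (θ : ℝ) : productConst θ ≠ 0 := by
  simp [productConst]

theorem productConst_ne_top {θ : ℝ} (hθ0 : 0 < θ) (hθ1 : θ < 1) : productConst θ ≠ ∞ := by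
  have := truncationConst_ne_top hθ0 hθ1
  unfold productConst
  finiteness

theorem gagliardoDensity_clm_apply_self_le {A : ℝ → V →L[ℝ] W} {f : ℝ → V}
    (hA : ∀ s, ‖A s‖ ≤ K)
    (hAf : ∀ s, ∀ h > 0, ‖A (s + h) - A s‖ ≤ K * (h + M⁻¹ * ‖f (s + h) - f s‖))
    (hM : 0 < M) (hfM : ∀ s, ‖f s‖ ≤ M) (hf : StronglyMeasurable f) :
    gagliardoDensity θ (fun s => A s (f s)) t
      ≤ ENNReal.ofReal (12 * K ^ 2) * productConst θ * (gagliardoDensity θ f t + ‖f t‖ₑ ^ 2) := by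
  have normalized_le_one : ENNReal.ofReal (M⁻¹ ^ 2) * ‖f t‖ₑ ^ 2 ≤ 1 := by
    rw [enorm_sq_eq_ofReal_norm_sq, ← ENNReal.ofReal_mul (sq_nonneg _), ← mul_pow,
      ENNReal.ofReal_le_one]
    exact pow_le_one₀ (by positivity) ((inv_mul_le_one₀ hM).2 (hfM t))
  refine (gagliardoDensity_clm_apply_le hA hAf hM hf).trans ?_
  rw [mul_assoc (ENNReal.ofReal _) (productConst θ)]
  refine mul_le_mul_right ?_ _
  calc gagliardoDensity θ f t + truncationConst θ * ‖f t‖ₑ ^ 2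
        + ENNReal.ofReal (M⁻¹ ^ 2) * ‖f t‖ₑ ^ 2 * gagliardoDensity θ f t
      ≤ gagliardoDensity θ f t + productConst θ * ‖f t‖ₑ ^ 2 + 1 * gagliardoDensity θ f t := by
        gcongr
        exact truncationConst_le_productConst θ
    _ = 2 * gagliardoDensity θ f t + productConst θ * ‖f t‖ₑ ^ 2 := by ring
    _ ≤ productConst θ * (gagliardoDensity θ f t + ‖f t‖ₑ ^ 2) := by
        rw [mul_add]
        gcongr
        exact le_self_add

theorem IsPrimitive.gagliardoDensity_clm_apply_derivative_le [CompleteSpace V] {f g : ℝ → V}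
    (hfg : IsPrimitive f g) (hA : ∀ s, ‖A s‖ ≤ K)
    (hAf : ∀ s, ∀ h > 0, ‖A (s + h) - A s‖ ≤ K * (h + M⁻¹ * ‖f (s + h) - f s‖)) (hK : 0 < K)
    (hM : 0 < M) (hfM : ∀ s, ‖f s‖ ≤ M) (hg : StronglyMeasurable g) (hθ : 0 ≤ θ) :
    gagliardoDensity θ (fun s => A s (g s)) t
      ≤ ENNReal.ofReal (12 * K ^ 2) * productConst θ * (gagliardoDensity θ g t + ‖g t‖ₑ ^ 2) := by
  rcases eq_or_ne (gagliardoDensity θ g t) ∞ with htop | htop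
  · simp [htop, ENNReal.mul_top, productConst_ne_zero, hK.ne']
  have interpolation : ENNReal.ofReal (M⁻¹ ^ 2) * ‖g t‖ₑ ^ 2 * gagliardoDensity θ f t
      ≤ 144 * truncationConst θ * gagliardoDensity θ g t := by
    calc ENNReal.ofReal (M⁻¹ ^ 2) * ‖g t‖ₑ ^ 2 * gagliardoDensity θ f t
        ≤ ENNReal.ofReal (M⁻¹ ^ 2) * (ENNReal.ofReal (144 * M ^ 2) * truncationConst θ
            * gagliardoDensity θ g t) := by
          rw [mul_assoc, mul_comm (‖g t‖ₑ ^ 2)]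
          exact mul_le_mul_right (hfg.gagliardoDensity_mul_enorm_sq_le hθ hM hfM htop) _
      _ = 144 * truncationConst θ * gagliardoDensity θ g t := by
          rw [← mul_assoc, ← mul_assoc, ← ENNReal.ofReal_mul (sq_nonneg _),
            show M⁻¹ ^ 2 * (144 * M ^ 2) = 144 by field_simp, ENNReal.ofReal_ofNat]
  refine (gagliardoDensity_clm_apply_le hA hAf hM hg).trans ?_
  rw [mul_assoc (ENNReal.ofReal _) (productConst θ)]
  refine mul_le_mul_right ?_ _
  calc gagliardoDensity θ g t + truncationConst θ * ‖g t‖ₑ ^ 2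
        + ENNReal.ofReal (M⁻¹ ^ 2) * ‖g t‖ₑ ^ 2 * gagliardoDensity θ f t
      ≤ 2 * gagliardoDensity θ g t + productConst θ * ‖g t‖ₑ ^ 2
        + 144 * truncationConst θ * gagliardoDensity θ g t := by
        gcongr
        · exact le_mul_of_one_le_left' one_le_two
        · exact truncationConst_le_productConst θ
    _ = productConst θ * (gagliardoDensity θ g t + ‖g t‖ₑ ^ 2) := by
        rw [productConst]
        ring

end OperatorProduct

section RadialPart

variable {V : Type*} [NormedAddCommGroup V] [InnerProductSpace ℝ V]

/-- The rank one operator `x ↦ ⟪w / ‖w‖, x⟫ w`, which is `‖w‖` times the orthogonal projection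
onto the line spanned by `w`. -/
def radialPart (w : V) : V →L[ℝ] V := InnerProductSpace.rankOne ℝ w (NormedSpace.normalize w)

theorem norm_normalize_le_one (w : V) : ‖NormedSpace.normalize w‖ ≤ 1 := by
  rw [NormedSpace.normalize, norm_smul, norm_inv, norm_norm]
  exact inv_mul_le_one

theorem norm_radialPart_le (w : V) : ‖radialPart w‖ ≤ ‖w‖ := by
  rw [radialPart, InnerProductSpace.norm_rankOne]
  exact mul_le_of_le_one_right (norm_nonneg w) (norm_normalize_le_one w)

theorem norm_mul_norm_normalize_sub_le (a b : V) :
    ‖b‖ * ‖NormedSpace.normalize a - NormedSpace.normalize b‖ ≤ 2 * ‖a - b‖ := by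
  have split : ‖b‖ • (NormedSpace.normalize a - NormedSpace.normalize b)
      = (‖b‖ - ‖a‖) • NormedSpace.normalize a + (a - b) := by
    rw [smul_sub, sub_smul, NormedSpace.norm_smul_normalize, NormedSpace.norm_smul_normalize]
    abel
  calc ‖b‖ * ‖NormedSpace.normalize a - NormedSpace.normalize b‖
      = ‖(‖b‖ - ‖a‖) • NormedSpace.normalize a + (a - b)‖ := by
        rw [← split, norm_smul, norm_norm]
    _ ≤ ‖a - b‖ * 1 + ‖a - b‖ := by
        refine norm_add_le_of_le ?_ le_rfl
        rw [norm_smul, norm_sub_rev a b]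
        gcongr
        · exact abs_norm_sub_norm_le b a
        · exact norm_normalize_le_one a
    _ = 2 * ‖a - b‖ := by ring

theorem norm_radialPart_sub_le (a b : V) : ‖radialPart a - radialPart b‖ ≤ 3 * ‖a - b‖ := by
  have split : radialPart a - radialPart b
      = InnerProductSpace.rankOne ℝ (a - b) (NormedSpace.normalize a)
        + InnerProductSpace.rankOne ℝ b (NormedSpace.normalize a - NormedSpace.normalize b) := by
    simp only [radialPart, map_sub, sub_apply]
    abel
  rw [split]
  refine (norm_add_le _ _).trans ?_
  simp only [InnerProductSpace.norm_rankOne]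
  linarith [mul_le_of_le_one_right (norm_nonneg (a - b)) (norm_normalize_le_one a),
    norm_mul_norm_normalize_sub_le a b]

theorem hasDerivAt_norm_comp {f : ℝ → V} {f' : V} {t : ℝ} (hf : HasDerivAt f f' t)
    (hft : f t ≠ 0) :
    HasDerivAt (fun u => ‖f u‖) ⟪NormedSpace.normalize (f t), f'⟫ t := by
  have sqrt_norm_sq := hf.norm_sq.sqrt (pow_ne_zero 2 (norm_ne_zero_iff.2 hft))
  simp only [sqrt_sq (norm_nonneg _)] at sqrt_norm_sq
  convert sqrt_norm_sq using 1
  rw [mul_div_mul_left _ _ two_ne_zero, NormedSpace.normalize, real_inner_smul_left, inv_mul_eq_div]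

end RadialPart

section ElasticTension

variable {V : Type*} [NormedAddCommGroup V] {S Sp Ss : ℝ → ℝ → ℝ} {lam M μ p s t : ℝ} {f : ℝ → V}

/-- A tension coefficient `S p s` with partial derivatives `Sp` and `Ss`, continuously
differentiable for `p > 0`, obeying the `C^{1,1}` bounds with constant `μ` over `lam ≤ p ≤ M`. -/
structure IsElasticTension (S Sp Ss : ℝ → ℝ → ℝ) (lam M μ : ℝ) : Prop where
  hasDerivAt_fst : ∀ p s, 0 < p → HasDerivAt (fun q => S q s) (Sp p s) p
  hasDerivAt_snd : ∀ p s, 0 < p → HasDerivAt (fun t => S p t) (Ss p s) s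
  continuousOn_fst : ContinuousOn (fun q : ℝ × ℝ => Sp q.1 q.2) (Set.Ioi 0 ×ˢ Set.univ)
  continuousOn_snd : ContinuousOn (fun q : ℝ × ℝ => Ss q.1 q.2) (Set.Ioi 0 ×ˢ Set.univ)
  bound : ∀ p s, lam ≤ p → p ≤ M → |S p s| + |Ss p s| + M * |Sp p s| ≤ μ
  lipschitz : ∀ p₁ p₂ s₁ s₂ : ℝ, lam ≤ p₁ → p₁ ≤ M → lam ≤ p₂ → p₂ ≤ M →
    |Ss p₁ s₁ - Ss p₂ s₂| + M * |Sp p₁ s₁ - Sp p₂ s₂| ≤ μ * (|s₁ - s₂| + M⁻¹ * |p₁ - p₂|)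

theorem IsElasticTension.abs_snd_le (hS : IsElasticTension S Sp Ss lam M μ) (hlam : 0 < lam)
    (hp : lam ≤ p) (hpM : p ≤ M) : |Ss p s| ≤ μ := by
  have M_pos : 0 < M := hlam.trans_le (hp.trans hpM)
  have := hS.bound p s hp hpM
  have : 0 ≤ M * |Sp p s| := by positivity
  linarith [abs_nonneg (S p s)]

theorem IsElasticTension.nonneg (hS : IsElasticTension S Sp Ss lam M μ) (hlam : 0 < lam)
    (hlamM : lam ≤ M) : 0 ≤ μ :=
  (abs_nonneg _).trans (hS.abs_snd_le (s := 0) hlam hlamM le_rfl)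

theorem IsElasticTension.mul_abs_fst_le (hS : IsElasticTension S Sp Ss lam M μ)
    (hp : lam ≤ p) (hpM : p ≤ M) : M * |Sp p s| ≤ μ := by
  linarith [hS.bound p s hp hpM, abs_nonneg (S p s), abs_nonneg (Ss p s)]

theorem IsElasticTension.abs_sub_le (hS : IsElasticTension S Sp Ss lam M μ) (hlam : 0 < lam)
    {p₁ p₂ s₁ s₂ : ℝ} (hp₁ : lam ≤ p₁) (hp₁M : p₁ ≤ M) (hp₂ : lam ≤ p₂) (hp₂M : p₂ ≤ M) :
    |S p₁ s₁ - S p₂ s₂| ≤ μ * (|s₁ - s₂| + M⁻¹ * |p₁ - p₂|) := by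
  have M_pos : 0 < M := hlam.trans_le (hp₁.trans hp₁M)
  have vary_snd : |S p₁ s₁ - S p₁ s₂| ≤ μ * |s₁ - s₂| := by
    simpa only [norm_eq_abs] using convex_univ.norm_image_sub_le_of_norm_hasDerivWithin_le
      (fun x _ => (hS.hasDerivAt_snd p₁ x (hlam.trans_le hp₁)).hasDerivWithinAt)
      (fun x _ => hS.abs_snd_le hlam hp₁ hp₁M) (Set.mem_univ s₂) (Set.mem_univ s₁)
  have vary_fst : |S p₁ s₂ - S p₂ s₂| ≤ μ * M⁻¹ * |p₁ - p₂| := by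
    refine (convex_Icc lam M).norm_image_sub_le_of_norm_hasDerivWithin_le
      (fun x hx => (hS.hasDerivAt_fst x s₂ (hlam.trans_le hx.1)).hasDerivWithinAt)
      (fun x hx => ?_) ⟨hp₂, hp₂M⟩ ⟨hp₁, hp₁M⟩
    rw [norm_eq_abs, ← div_eq_mul_inv, le_div_iff₀' M_pos]
    exact hS.mul_abs_fst_le hx.1 hx.2
  linarith [_root_.abs_sub_le (S p₁ s₁) (S p₁ s₂) (S p₂ s₂)]

theorem IsElasticTension.hasFDerivAt (hS : IsElasticTension S Sp Ss lam M μ) (hp : 0 < p) :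
    HasFDerivAt (fun q : ℝ × ℝ => S q.1 q.2)
      ((ContinuousLinearMap.toSpanSingleton ℝ (Sp p s)).coprod
        (ContinuousLinearMap.toSpanSingleton ℝ (Ss p s))) (p, s) := by
  have half_plane_mem : (Set.Ioi 0 ×ˢ Set.univ : Set (ℝ × ℝ)) ∈ 𝓝 (p, s) :=
    (isOpen_Ioi.prod isOpen_univ).mem_nhds ⟨hp, trivial⟩
  have toSpanSingleton_continuous :
      Continuous (ContinuousLinearMap.toSpanSingleton ℝ : ℝ → ℝ →L[ℝ] ℝ) :=
    (ContinuousLinearMap.toSpanSingletonCLE (𝕜 := ℝ) (E := ℝ)).continuous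
  exact (hasStrictFDerivAt_uncurry_coprod (u := (p, s)) (f := S)
    (f₁ := fun p s => ContinuousLinearMap.toSpanSingleton ℝ (Sp p s))
    (f₂ := fun p s => ContinuousLinearMap.toSpanSingleton ℝ (Ss p s))
    (mem_of_superset half_plane_mem fun q hq => (hS.hasDerivAt_fst q.1 q.2 hq.1).hasFDerivAt)
    (mem_of_superset half_plane_mem fun q hq => (hS.hasDerivAt_snd q.1 q.2 hq.1).hasFDerivAt)
    (toSpanSingleton_continuous.continuousAt.comp (hS.continuousOn_fst.continuousAt half_plane_mem))
    (toSpanSingleton_continuous.continuousAt.comp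
      (hS.continuousOn_snd.continuousAt half_plane_mem))).hasFDerivAt

theorem IsElasticTension.continuous_snd_comp_norm (hS : IsElasticTension S Sp Ss lam M μ)
    (hf : Continuous f) (hf0 : ∀ s, f s ≠ 0) : Continuous fun s => Ss ‖f s‖ s :=
  hS.continuousOn_snd.comp_continuous (hf.norm.prodMk continuous_id)
    fun s => ⟨norm_pos_iff.2 (hf0 s), trivial⟩

theorem modulus_norm_comp_le {h : ℝ} (hμ : 0 ≤ μ) (hM : 0 ≤ M) (hh : 0 < h) :
    μ * (|t + h - t| + M⁻¹ * |‖f (t + h)‖ - ‖f t‖|) ≤ μ * (h + M⁻¹ * ‖f (t + h) - f t‖) := by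
  rw [add_sub_cancel_left, abs_of_pos hh]
  gcongr
  exact abs_norm_sub_norm_le _ _

end ElasticTension

section ElasticForce

variable {V : Type*} [NormedAddCommGroup V] [InnerProductSpace ℝ V]
  {S Sp Ss : ℝ → ℝ → ℝ} {lam M μ θ t : ℝ} {f g : ℝ → V}

/-- The operator applied to `f'` in the derivative of `S ‖f‖ • f`. -/
def elasticOperator (S Sp : ℝ → ℝ → ℝ) (f : ℝ → V) (t : ℝ) : V →L[ℝ] V :=
  S ‖f t‖ t • ContinuousLinearMap.id ℝ V + Sp ‖f t‖ t • radialPart (f t)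

/-- The elastic force density of a curve with tangent `f` and `f' = g`, once the derivative of
`S ‖f‖ • f` has been expanded. -/
def elasticForce (S Sp Ss : ℝ → ℝ → ℝ) (f g : ℝ → V) (t : ℝ) : V :=
  Ss ‖f t‖ t • f t + elasticOperator S Sp f t (g t)

theorem IsElasticTension.hasDerivAt_elasticForce (hS : IsElasticTension S Sp Ss lam M μ)
    (hf : HasDerivAt f (g t) t) (hft : f t ≠ 0) :
    HasDerivAt (fun u => S ‖f u‖ u • f u) (elasticForce S Sp Ss f g t) t := by
  have tension := (hS.hasFDerivAt (s := t) (norm_pos_iff.2 hft)).comp_hasDerivAt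
    (f := fun u => (‖f u‖, u)) t ((hasDerivAt_norm_comp hf hft).prodMk (hasDerivAt_id t))
  refine (tension.smul hf).congr_deriv ?_
  simp only [elasticForce, elasticOperator, radialPart, add_apply, smul_apply,
    ContinuousLinearMap.id_apply, InnerProductSpace.rankOne_apply, ContinuousLinearMap.coprod_apply,
    ContinuousLinearMap.toSpanSingleton_apply, smul_eq_mul, add_smul,
    smul_smul, one_mul, Function.comp_apply]
  rw [mul_comm (Sp _ _)]
  abel

theorem IsElasticTension.norm_elasticOperator_le (hS : IsElasticTension S Sp Ss lam M μ)
    (hf : ∀ s, ‖f s‖ ∈ Set.Icc lam M) (t : ℝ) : ‖elasticOperator S Sp f t‖ ≤ μ := by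
  calc ‖elasticOperator S Sp f t‖
      ≤ |S ‖f t‖ t| * 1 + |Sp ‖f t‖ t| * M := by
        refine norm_add_le_of_le ?_ ?_ <;> rw [norm_smul, norm_eq_abs] <;> gcongr
        · exact ContinuousLinearMap.norm_id_le
        · exact (norm_radialPart_le _).trans (hf t).2
    _ ≤ μ := by linarith [hS.bound ‖f t‖ t (hf t).1 (hf t).2, abs_nonneg (Ss ‖f t‖ t)]

theorem IsElasticTension.norm_elasticOperator_sub_le (hS : IsElasticTension S Sp Ss lam M μ)
    (hlam : 0 < lam) (hf : ∀ s, ‖f s‖ ∈ Set.Icc lam M) {h : ℝ} (hh : 0 < h) :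
    ‖elasticOperator S Sp f (t + h) - elasticOperator S Sp f t‖
      ≤ 5 * μ * (h + M⁻¹ * ‖f (t + h) - f t‖) := by
  have M_pos : 0 < M := hlam.trans_le ((hf t).1.trans (hf t).2)
  have μ_nonneg := hS.nonneg hlam ((hf t).1.trans (hf t).2)
  have modulus_le := modulus_norm_comp_le (f := f) (t := t) μ_nonneg M_pos.le hh
  have S_le := (hS.abs_sub_le hlam (hf (t + h)).1 (hf (t + h)).2 (hf t).1 (hf t).2).trans
    modulus_le
  have Sp_le := (hS.lipschitz _ _ (t + h) t (hf (t + h)).1 (hf (t + h)).2 (hf t).1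
    (hf t).2).trans modulus_le
  have radial_le : |Sp ‖f t‖ t| * (3 * ‖f (t + h) - f t‖)
      ≤ 3 * (μ * (M⁻¹ * ‖f (t + h) - f t‖)) := by
    calc |Sp ‖f t‖ t| * (3 * ‖f (t + h) - f t‖)
        = 3 * (M * |Sp ‖f t‖ t| * (M⁻¹ * ‖f (t + h) - f t‖)) := by field_simp
      _ ≤ 3 * (μ * (M⁻¹ * ‖f (t + h) - f t‖)) := by
        gcongr
        exact hS.mul_abs_fst_le (hf t).1 (hf t).2
  calc ‖elasticOperator S Sp f (t + h) - elasticOperator S Sp f t‖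
      = ‖(S ‖f (t + h)‖ (t + h) - S ‖f t‖ t) • ContinuousLinearMap.id ℝ V
          + (Sp ‖f (t + h)‖ (t + h) - Sp ‖f t‖ t) • radialPart (f (t + h))
          + Sp ‖f t‖ t • (radialPart (f (t + h)) - radialPart (f t))‖ := by
        simp only [elasticOperator, sub_smul, smul_sub]
        abel_nf
    _ ≤ |S ‖f (t + h)‖ (t + h) - S ‖f t‖ t| * 1
          + |Sp ‖f (t + h)‖ (t + h) - Sp ‖f t‖ t| * M
          + |Sp ‖f t‖ t| * (3 * ‖f (t + h) - f t‖) := by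
        refine norm_add_le_of_le (norm_add_le_of_le ?_ ?_) ?_ <;>
          rw [norm_smul, norm_eq_abs] <;> gcongr
        · exact ContinuousLinearMap.norm_id_le
        · exact (norm_radialPart_le _).trans (hf (t + h)).2
        · exact norm_radialPart_sub_le _ _
    _ ≤ 5 * μ * (h + M⁻¹ * ‖f (t + h) - f t‖) := by
        have : 0 ≤ μ * h := by positivity
        linarith [abs_nonneg (Ss ‖f (t + h)‖ (t + h) - Ss ‖f t‖ t)]

theorem IsElasticTension.norm_snd_smul_id_sub_le (hS : IsElasticTension S Sp Ss lam M μ)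
    (hlam : 0 < lam) (hf : ∀ s, ‖f s‖ ∈ Set.Icc lam M) {h : ℝ} (hh : 0 < h) :
    ‖Ss ‖f (t + h)‖ (t + h) • ContinuousLinearMap.id ℝ V
        - Ss ‖f t‖ t • ContinuousLinearMap.id ℝ V‖
      ≤ 5 * μ * (h + M⁻¹ * ‖f (t + h) - f t‖) := by
  have M_pos : 0 < M := hlam.trans_le ((hf t).1.trans (hf t).2)
  have μ_nonneg := hS.nonneg hlam ((hf t).1.trans (hf t).2)
  have Ss_le := (hS.lipschitz _ _ (t + h) t (hf (t + h)).1 (hf (t + h)).2 (hf t).1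
    (hf t).2).trans (modulus_norm_comp_le μ_nonneg M_pos.le hh)
  have : 0 ≤ M * |Sp ‖f (t + h)‖ (t + h) - Sp ‖f t‖ t| := by positivity
  have : 0 ≤ μ * (h + M⁻¹ * ‖f (t + h) - f t‖) := by positivity
  rw [← sub_smul, norm_smul, norm_eq_abs]
  linarith [mul_le_of_le_one_right (abs_nonneg (Ss ‖f (t + h)‖ (t + h) - Ss ‖f t‖ t))
    (ContinuousLinearMap.norm_id_le (𝕜 := ℝ) (E := V))]

theorem IsElasticTension.norm_elasticForce_le (hS : IsElasticTension S Sp Ss lam M μ)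
    (hlam : 0 < lam) (hf : ∀ s, ‖f s‖ ∈ Set.Icc lam M) (t : ℝ) :
    ‖elasticForce S Sp Ss f g t‖ ≤ μ * ‖f t‖ + μ * ‖g t‖ := by
  refine norm_add_le_of_le ?_ ((elasticOperator S Sp f t).le_of_opNorm_le
    (hS.norm_elasticOperator_le hf t) _)
  rw [norm_smul, norm_eq_abs]
  gcongr
  exact hS.abs_snd_le hlam (hf t).1 (hf t).2

theorem IsElasticTension.gagliardoDensity_elasticForce_le [CompleteSpace V]
    (hS : IsElasticTension S Sp Ss lam M μ) (hlam : 0 < lam) (hμ : 0 < μ)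
    (hf : ∀ s, ‖f s‖ ∈ Set.Icc lam M) (hfc : Continuous f) (hfg : IsPrimitive f g)
    (hg : StronglyMeasurable g) (hθ : 0 ≤ θ) (t : ℝ) :
    gagliardoDensity θ (elasticForce S Sp Ss f g) t
      ≤ ENNReal.ofReal (600 * μ ^ 2) * productConst θ
        * (gagliardoDensity θ f t + ‖f t‖ₑ ^ 2 + (gagliardoDensity θ g t + ‖g t‖ₑ ^ 2)) := by
  have M_pos : 0 < M := hlam.trans_le ((hf t).1.trans (hf t).2)
  have scalar_part : gagliardoDensity θ (fun s => Ss ‖f s‖ s • f s) t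
      ≤ ENNReal.ofReal (12 * (5 * μ) ^ 2) * productConst θ
        * (gagliardoDensity θ f t + ‖f t‖ₑ ^ 2) := by
    refine gagliardoDensity_clm_apply_self_le
      (A := fun s => Ss ‖f s‖ s • ContinuousLinearMap.id ℝ V) (fun s => ?_)
      (fun s h hh => hS.norm_snd_smul_id_sub_le hlam hf hh) M_pos (fun s => (hf s).2)
      hfc.stronglyMeasurable
    rw [norm_smul, norm_eq_abs]
    linarith [mul_le_of_le_one_right (abs_nonneg (Ss ‖f s‖ s))
      (ContinuousLinearMap.norm_id_le (𝕜 := ℝ) (E := V)),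
      hS.abs_snd_le (s := s) hlam (hf s).1 (hf s).2]
  have operator_part : gagliardoDensity θ (fun s => elasticOperator S Sp f s (g s)) t
      ≤ ENNReal.ofReal (12 * (5 * μ) ^ 2) * productConst θ
        * (gagliardoDensity θ g t + ‖g t‖ₑ ^ 2) :=
    hfg.gagliardoDensity_clm_apply_derivative_le
      (fun s => (hS.norm_elasticOperator_le hf s).trans (by linarith))
      (fun s h hh => hS.norm_elasticOperator_sub_le hlam hf hh) (by positivity) M_pos
      (fun s => (hf s).2) hg hθ
  have measurable_scalar_part : StronglyMeasurable fun s => Ss ‖f s‖ s • f s :=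
    ((hS.continuous_snd_comp_norm hfc fun s => norm_pos_iff.1 (hlam.trans_le (hf s).1)).smul
      hfc).stronglyMeasurable
  calc gagliardoDensity θ (elasticForce S Sp Ss f g) t
      ≤ 2 * (gagliardoDensity θ (fun s => Ss ‖f s‖ s • f s) t
          + gagliardoDensity θ (fun s => elasticOperator S Sp f s (g s)) t) :=
        gagliardoDensity_add_le measurable_scalar_part
    _ ≤ 2 * (ENNReal.ofReal (12 * (5 * μ) ^ 2) * productConst θ
          * (gagliardoDensity θ f t + ‖f t‖ₑ ^ 2) + ENNReal.ofReal (12 * (5 * μ) ^ 2)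
          * productConst θ * (gagliardoDensity θ g t + ‖g t‖ₑ ^ 2)) := by gcongr
    _ = _ := by
        rw [show 600 * μ ^ 2 = 2 * (12 * (5 * μ) ^ 2) by ring,
          ENNReal.ofReal_mul zero_le_two, ENNReal.ofReal_ofNat]
        ring

end ElasticForce

section AbsoluteContinuity

variable {V : Type*} [NormedAddCommGroup V] [NormedSpace ℝ V] {f g : ℝ → V} {a b : ℝ}

theorem absolutelyContinuousOnInterval_of_dist_le {X Z : Type*} [PseudoMetricSpace X]
    [PseudoMetricSpace Z] {p : ℝ → X} {q : ℝ → Z} (hq : AbsolutelyContinuousOnInterval q a b)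
    (hpq : ∀ x ∈ Set.uIcc a b, ∀ y ∈ Set.uIcc a b, dist (p x) (p y) ≤ dist (q x) (q y)) :
    AbsolutelyContinuousOnInterval p a b := by
  rw [absolutelyContinuousOnInterval_iff] at hq ⊢
  intro ε hε
  obtain ⟨δ, hδ, small⟩ := hq ε hε
  refine ⟨δ, hδ, fun E hE hEδ => (Finset.sum_le_sum fun i hi => ?_).trans_lt (small E hE hEδ)⟩
  exact hpq _ (hE.1 i hi).1 _ (hE.1 i hi).2

theorem absolutelyContinuousOnInterval_integral (hg : IntervalIntegrable g volume a b) :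
    AbsolutelyContinuousOnInterval (fun x => ∫ u in a..x, g u) a b := by
  refine absolutelyContinuousOnInterval_of_dist_le
    (hg.norm.absolutelyContinuousOnInterval_intervalIntegral Set.left_mem_uIcc) fun x hx y hy => ?_
  have hax := hg.mono_set (Set.uIcc_subset_uIcc_left hx)
  have hay := hg.mono_set (Set.uIcc_subset_uIcc_left hy)
  rw [dist_eq_norm, intervalIntegral.integral_interval_sub_left hax hay, Real.dist_eq,
    intervalIntegral.integral_interval_sub_left hax.norm hay.norm]
  exact intervalIntegral.norm_integral_le_abs_integral_norm

theorem integral_eq_sub_of_absolutelyContinuousOnInterval [CompleteSpace V]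
    (hf : AbsolutelyContinuousOnInterval f a b) (hg : IntervalIntegrable g volume a b)
    (hfg : ∀ᵐ t, HasDerivAt f (g t) t) : ∫ u in a..b, g u = f b - f a := by
  obtain ⟨C, hC⟩ := (hf.sub
    (absolutelyContinuousOnInterval_integral hg)).const_of_ae_hasDerivAt_zero <| by
      filter_upwards [hfg, hg.ae_hasDerivAt_integral] with t hft hgt ht
      simpa using hft.sub (hgt ht a Set.left_mem_uIcc)
  have at_left := hC a Set.left_mem_uIcc
  have at_right := hC b Set.right_mem_uIcc
  simp only [Pi.sub_apply, intervalIntegral.integral_same, sub_zero] at at_left at_right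
  rw [at_left, ← at_right, sub_sub_cancel]

theorem IsPrimitive.absolutelyContinuousOnInterval (hfg : IsPrimitive f g) (a b : ℝ) :
    AbsolutelyContinuousOnInterval f a b := by
  refine absolutelyContinuousOnInterval_of_dist_le
    (absolutelyContinuousOnInterval_integral (hfg.intervalIntegrable a b)) fun x _ y _ => ?_
  rw [dist_comm (f x), dist_comm (∫ u in a..x, g u), dist_eq_norm, dist_eq_norm,
    intervalIntegral.integral_interval_sub_left (hfg.intervalIntegrable a y)
      (hfg.intervalIntegrable a x)]
  obtain hxy | hyx := le_total x y
  · rw [hfg.sub_eq_integral x y hxy]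
  · rw [intervalIntegral.integral_symm, norm_neg, ← hfg.sub_eq_integral y x hyx, norm_sub_rev]

theorem IsPrimitive.clm_apply [CompleteSpace V] {W : Type*} [NormedAddCommGroup W]
    [NormedSpace ℝ W] [CompleteSpace W] (L : V →L[ℝ] W) (hfg : IsPrimitive f g) :
    IsPrimitive (fun t => L (f t)) fun t => L (g t) where
  locallyIntegrable x := L.integrableAtFilter_comp (hfg.locallyIntegrable x)
  sub_eq_integral a b hab := by
    rw [← map_sub, hfg.sub_eq_integral a b hab,
      L.intervalIntegral_comp_comm (hfg.intervalIntegrable a b)]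

theorem IsPrimitive.integral_mul_eq_sub {u v φ ψ : ℝ → ℂ} (hu : IsPrimitive u v)
    (hφ : IsPrimitive φ ψ) (a b : ℝ) :
    ∫ t in a..b, v t * φ t = u b * φ b - u a * φ a - ∫ t in a..b, u t * ψ t := by
  have hu_ac := hu.absolutelyContinuousOnInterval a b
  have hφ_ac := hφ.absolutelyContinuousOnInterval a b
  have hvφ := (hu.intervalIntegrable a b).mul_continuousOn hφ_ac.continuousOn
  have huψ := (hφ.intervalIntegrable a b).continuousOn_mul hu_ac.continuousOn
  rw [eq_sub_iff_add_eq, ← intervalIntegral.integral_add hvφ huψ]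
  refine integral_eq_sub_of_absolutelyContinuousOnInterval (hu_ac.smul hφ_ac)
    (hvφ.add huψ) ?_
  filter_upwards [hu.ae_hasDerivAt, hφ.ae_hasDerivAt] with t hut hφt
  exact hut.mul hφt

end AbsoluteContinuity

section FourierMode

variable {u v : ℝ → ℂ} {h : ℝ}

/-- The character `s ↦ e ^ (-iks)` against which the Fourier coefficients are computed. -/
def fourierMode (k : ℤ) (s : ℝ) : ℂ :=
  Complex.exp (-Complex.I * k * s)

theorem hasDerivAt_fourierMode (k : ℤ) (s : ℝ) :
    HasDerivAt (fourierMode k) (-Complex.I * k * fourierMode k s) s := by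
  have hasDerivAt_exponent : HasDerivAt (fun s : ℝ => -Complex.I * k * s) (-Complex.I * k) s := by
    simpa using (Complex.ofRealCLM.hasDerivAt (x := s)).const_mul (-Complex.I * k)
  exact hasDerivAt_exponent.cexp.congr_deriv (mul_comm _ _)

theorem continuous_fourierMode (k : ℤ) : Continuous (fourierMode k) := by
  unfold fourierMode
  fun_prop

theorem fourierMode_add (k : ℤ) (s h : ℝ) :
    fourierMode k (s + h) = fourierMode k s * fourierMode k h := by
  rw [fourierMode, fourierMode, fourierMode, ← Complex.exp_add]
  push_cast
  ring_nf

theorem periodic_fourierMode (k : ℤ) : Function.Periodic (fourierMode k) (2 * π) := fun s => by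
  rw [fourierMode, fourierMode, Complex.exp_eq_exp_iff_exists_int]
  exact ⟨-k, by push_cast; ring⟩

theorem normSq_fourierMode_sub_one (k : ℤ) (h : ℝ) :
    Complex.normSq (fourierMode k h - 1) = 2 - 2 * cos (k * h) := by
  have polar : fourierMode k h = ⟨cos (k * h), -sin (k * h)⟩ := by
    rw [fourierMode, show -Complex.I * k * h = ((-(k * h) : ℝ) : ℂ) * Complex.I by push_cast; ring]
    apply Complex.ext
    · rw [Complex.exp_ofReal_mul_I_re, cos_neg]
    · rw [Complex.exp_ofReal_mul_I_im, sin_neg]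
  rw [polar, Complex.normSq_apply]
  simp only [Complex.sub_re, Complex.sub_im, Complex.one_re, Complex.one_im]
  linear_combination sin_sq_add_cos_sq (k * h)

/-- The unnormalised Fourier coefficient `∫_{-π}^{π} u(s) e ^ (-iks) ds` of a scalar function, whose
squared moduli over the two components add up to `coefSq`. -/
def torusFourierCoeff (u : ℝ → ℂ) (k : ℤ) : ℂ :=
  ∫ s in (-π)..π, u s * fourierMode k s

theorem torusFourierCoeff_eq_mul_fourierCoeffOn (u : ℝ → ℂ) (k : ℤ) :
    torusFourierCoeff u k = 2 * π * fourierCoeffOn (neg_lt_self pi_pos) u k := by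
  have hπ : (π : ℂ) ≠ 0 := Complex.ofReal_ne_zero.2 pi_ne_zero
  rw [fourierCoeffOn_eq_integral, sub_neg_eq_add, ← two_mul, Complex.real_smul, ← mul_assoc]
  push_cast
  rw [mul_one_div_cancel (mul_ne_zero two_ne_zero hπ), one_mul]
  refine intervalIntegral.integral_congr fun s _ => ?_
  rw [smul_eq_mul, mul_comm, fourierMode, fourier_coe_apply]
  congr 2
  push_cast
  field_simp

theorem tsum_normSq_torusFourierCoeff (hu : MemLp u 2 (volume.restrict (Set.Ioc (-π) π))) :
    ∑' k, ENNReal.ofReal (Complex.normSq (torusFourierCoeff u k))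
      = ENNReal.ofReal (2 * π) * ∫⁻ t in Set.Ioc (-π) π, ‖u t‖ₑ ^ 2 := by
  have parseval := (hasSum_sq_fourierCoeffOn (neg_lt_self pi_pos) hu).mul_left ((2 * π) ^ 2)
  have rescale (k : ℤ) : (2 * π) ^ 2 * ‖fourierCoeffOn (neg_lt_self pi_pos) u k‖ ^ 2
      = Complex.normSq (torusFourierCoeff u k) := by
    rw [torusFourierCoeff_eq_mul_fourierCoeffOn, Complex.normSq_eq_norm_sq, norm_mul, mul_pow]
    norm_num [abs_of_pos pi_pos, mul_pow]
  simp only [rescale] at parseval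
  rw [← ENNReal.ofReal_tsum_of_nonneg (fun _ => Complex.normSq_nonneg _) parseval.summable,
    parseval.tsum_eq, intervalIntegral.integral_of_le (neg_le_self pi_pos.le), smul_eq_mul,
    show (2 * π) ^ 2 * ((π - -π)⁻¹ * ∫ x in Set.Ioc (-π) π, ‖u x‖ ^ 2)
      = 2 * π * ∫ x in Set.Ioc (-π) π, ‖u x‖ ^ 2 by
        rw [sub_neg_eq_add, ← two_mul]; field_simp,
    ENNReal.ofReal_mul two_pi_pos.le, ofReal_integral_eq_lintegral_ofReal hu.norm.integrable_sq
      (ae_of_all _ fun _ => sq_nonneg _)]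
  simp only [enorm_sq_eq_ofReal_norm_sq]

theorem torusFourierCoeff_comp_add_right (hu : Function.Periodic u (2 * π)) (h : ℝ) (k : ℤ) :
    torusFourierCoeff (fun s => u (s + h)) k = fourierMode k (-h) * torusFourierCoeff u k := by
  have hper : Function.Periodic (fun s => u s * fourierMode k s) (2 * π) :=
    hu.mul (periodic_fourierMode k)
  have mode_shift (s : ℝ) : fourierMode k s = fourierMode k (-h) * fourierMode k (s + h) := by
    rw [mul_comm, ← fourierMode_add, add_neg_cancel_right]
  have translate := hper.intervalIntegral_add_eq (-π + h) (-π)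
  rw [show -π + h + 2 * π = π + h by ring, show -π + 2 * π = π by ring] at translate
  simp only [torusFourierCoeff]
  rw [← translate, ← intervalIntegral.integral_comp_add_right,
    ← intervalIntegral.integral_const_mul]
  refine intervalIntegral.integral_congr fun s _ => ?_
  linear_combination u (s + h) * mode_shift s

theorem torusFourierCoeff_sub (hu : IntervalIntegrable u volume (-π) π)
    (hv : IntervalIntegrable v volume (-π) π) (k : ℤ) :
    torusFourierCoeff (fun s => u s - v s) k = torusFourierCoeff u k - torusFourierCoeff v k := by
  simp only [torusFourierCoeff, sub_mul]
  exact intervalIntegral.integral_sub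
    (hu.mul_continuousOn (continuous_fourierMode k).continuousOn)
    (hv.mul_continuousOn (continuous_fourierMode k).continuousOn)

theorem normSq_torusFourierCoeff_increment (hper : Function.Periodic u (2 * π))
    (hu : IntervalIntegrable u volume (-π) π) (h : ℝ) (k : ℤ) :
    Complex.normSq (torusFourierCoeff (fun s => u (s + h) - u s) k)
      = (2 - 2 * cos (k * h)) * Complex.normSq (torusFourierCoeff u k) := by
  have integrable_everywhere (a b : ℝ) : IntervalIntegrable u volume a b :=
    hper.intervalIntegrable two_pi_pos.ne' (t := -π)
      (by rwa [show -π + 2 * π = π by ring]) a b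
  have integrable_shift : IntervalIntegrable (fun s => u (s + h)) volume (-π) π := by
    simpa using (integrable_everywhere (-π + h) (π + h)).comp_add_right h
  rw [torusFourierCoeff_sub integrable_shift hu, torusFourierCoeff_comp_add_right hper,
    ← sub_one_mul, Complex.normSq_mul, normSq_fourierMode_sub_one, mul_neg, cos_neg]

theorem IsPrimitive.torusFourierCoeff_eq (huv : IsPrimitive u v)
    (hper : Function.Periodic u (2 * π)) (k : ℤ) :
    torusFourierCoeff v k = Complex.I * k * torusFourierCoeff u k := by
  have mode_primitive := isPrimitive_of_hasDerivAt (hasDerivAt_fourierMode k)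
    (continuous_const.mul (continuous_fourierMode k))
  have endpoints (w : ℝ → ℂ) (hw : Function.Periodic w (2 * π)) : w π = w (-π) := by
    simpa [show -π + 2 * π = π by ring] using hw (-π)
  rw [torusFourierCoeff, huv.integral_mul_eq_sub mode_primitive, endpoints u hper,
    endpoints _ (periodic_fourierMode k), sub_self, zero_sub, torusFourierCoeff,
    ← intervalIntegral.integral_const_mul, ← intervalIntegral.integral_neg]
  exact intervalIntegral.integral_congr fun s _ => by ring

end FourierMode

section PeriodicTranslation

theorem setLIntegral_comp_add_right_of_periodic {φ : ℝ → ℝ≥0∞} {T : ℝ} (hT : 0 < T)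
    (hφ : Function.Periodic φ T) (a h : ℝ) :
    ∫⁻ t in Set.Ioc a (a + T), φ (t + h) = ∫⁻ t in Set.Ioc a (a + T), φ t := by
  have translate := (measurePreserving_add_right volume h).setLIntegral_comp_preimage_emb
    (measurableEmbedding_addRight h) φ (Set.Ioc (a + h) (a + h + T))
  rw [Set.preimage_add_const_Ioc, add_right_comm, add_sub_cancel_right, add_sub_cancel_right]
    at translate
  rw [translate, add_right_comm]
  refine (isAddFundamentalDomain_Ioc hT (a + h) volume).setLIntegral_eq
    (isAddFundamentalDomain_Ioc hT a volume) φ ?_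
  rintro ⟨_, hg⟩ x
  obtain ⟨n, rfl⟩ := AddSubgroup.mem_zmultiples_iff.1 hg
  simpa [AddSubgroup.vadd_def, add_comm] using hφ.zsmul n x

theorem memLp_two_comp_add_right_of_periodic {V : Type*} [NormedAddCommGroup V] {u : ℝ → V}
    {a T : ℝ} (hT : 0 < T) (hper : Function.Periodic u T) (hu_meas : StronglyMeasurable u)
    (hu : MemLp u 2 (volume.restrict (Set.Ioc a (a + T)))) (h : ℝ) :
    MemLp (fun t => u (t + h)) 2 (volume.restrict (Set.Ioc a (a + T))) := by
  refine ⟨(hu_meas.comp_measurable (measurable_add_const h)).aestronglyMeasurable, ?_⟩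
  have finite := hu.2
  rw [eLpNorm_lt_top_iff_lintegral_rpow_enorm_lt_top two_ne_zero ENNReal.ofNat_ne_top] at finite ⊢
  exact (setLIntegral_comp_add_right_of_periodic hT
    (hper.comp fun x => ‖x‖ₑ ^ (2 : ℝ≥0∞).toReal) a h).trans_lt finite

end PeriodicTranslation

section FourierCoefficients

variable {u v f g : ℝ → E2}

/-- The `j`-th coordinate of a point of the plane, complexified. -/
def complexCoord (j : Fin 2) : E2 →L[ℝ] ℂ :=
  Complex.ofRealCLM.comp (EuclideanSpace.proj j)

theorem coefSq_eq_sum (u : ℝ → E2) (k : ℤ) :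
    coefSq u k
      = ∑ j, Complex.normSq (torusFourierCoeff (fun s => complexCoord j (u s)) k) := rfl

theorem enorm_sq_eq_sum_complexCoord (x : E2) : ‖x‖ₑ ^ 2 = ∑ j, ‖complexCoord j x‖ₑ ^ 2 := by
  simp only [enorm_sq_eq_ofReal_norm_sq]
  rw [EuclideanSpace.norm_sq_eq, ENNReal.ofReal_sum_of_nonneg fun _ _ => sq_nonneg _]
  simp [complexCoord]

theorem coefSq_nonneg (u : ℝ → E2) (k : ℤ) : 0 ≤ coefSq u k :=
  Finset.sum_nonneg fun _ _ => Complex.normSq_nonneg _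

theorem coefSq_congr_ae (huv : u =ᵐ[volume] v) (k : ℤ) : coefSq u k = coefSq v k := by
  refine Finset.sum_congr rfl fun j _ => congrArg _ ?_
  exact intervalIntegral.integral_congr_ae (huv.mono fun s hs _ => by rw [hs])

theorem tsum_ofReal_coefSq (hu : MemLp u 2 (volume.restrict (Set.Ioc (-π) π))) :
    ∑' k, ENNReal.ofReal (coefSq u k)
      = ENNReal.ofReal (2 * π) * ∫⁻ t in Set.Ioc (-π) π, ‖u t‖ₑ ^ 2 := by
  have hcoord (j : Fin 2) : MemLp (fun s => complexCoord j (u s)) 2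
      (volume.restrict (Set.Ioc (-π) π)) := (complexCoord j).comp_memLp' hu
  simp only [coefSq_eq_sum, ENNReal.ofReal_sum_of_nonneg fun _ _ => Complex.normSq_nonneg _,
    enorm_sq_eq_sum_complexCoord]
  rw [Summable.tsum_finsetSum fun _ _ => ENNReal.summable,
    lintegral_finsetSum' _ fun j _ => (hcoord j).aestronglyMeasurable.enorm.pow_const 2,
    Finset.mul_sum]
  exact Finset.sum_congr rfl fun j _ => tsum_normSq_torusFourierCoeff (hcoord j)

theorem coefSq_increment (hper : Function.Periodic u (2 * π))
    (hu : MemLp u 2 (volume.restrict (Set.Ioc (-π) π))) (h : ℝ) (k : ℤ) :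
    coefSq (fun t => u (t + h) - u t) k = (2 - 2 * cos (k * h)) * coefSq u k := by
  rw [coefSq_eq_sum, coefSq_eq_sum, Finset.mul_sum]
  refine Finset.sum_congr rfl fun j _ => ?_
  simp only [map_sub]
  refine normSq_torusFourierCoeff_increment (u := fun s => complexCoord j (u s))
    (hper.comp (complexCoord j)) ?_ h k
  rw [intervalIntegrable_iff_integrableOn_Ioc_of_le (neg_le_self pi_pos.le)]
  exact ((complexCoord j).comp_memLp' hu).integrable one_le_two

theorem IsPrimitive.coefSq_eq (hfg : IsPrimitive f g) (hper : Function.Periodic f (2 * π))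
    (k : ℤ) : coefSq g k = |(k : ℝ)| ^ 2 * coefSq f k := by
  rw [coefSq_eq_sum, coefSq_eq_sum, Finset.mul_sum]
  refine Finset.sum_congr rfl fun j _ => ?_
  rw [(hfg.clm_apply (complexCoord j)).torusFourierCoeff_eq (hper.comp _), Complex.normSq_mul,
    Complex.normSq_mul, Complex.normSq_I, one_mul, Complex.normSq_intCast, sq_abs, sq]

theorem tsum_ofReal_mul_coefSq_eq_lintegral_increment_sq (hu_meas : StronglyMeasurable u)
    (hper : Function.Periodic u (2 * π)) (hu : MemLp u 2 (volume.restrict (Set.Ioc (-π) π)))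
    (h : ℝ) :
    ∑' k : ℤ, ENNReal.ofReal ((2 - 2 * cos (k * h)) * coefSq u k)
      = ENNReal.ofReal (2 * π) * ∫⁻ t in Set.Ioc (-π) π, ‖u (t + h) - u t‖ₑ ^ 2 := by
  have hshift : MemLp (fun t => u (t + h)) 2 (volume.restrict (Set.Ioc (-π) π)) := by
    have period : -π + 2 * π = π := by ring
    simpa only [period] using memLp_two_comp_add_right_of_periodic (a := -π) two_pi_pos hper
      hu_meas (by rwa [period]) h
  simp only [← coefSq_increment hper hu]
  exact tsum_ofReal_coefSq (hshift.sub hu)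

end FourierCoefficients

section SobolevEnergy

variable {σ τ θ : ℝ} {u v f g : ℝ → E2}

/-- The squared homogeneous Sobolev seminorm `‖u‖²_{Ḣ^σ(𝕋)}`, which is `∞` rather than `0` when the
series diverges. -/
def sobEnergy (σ : ℝ) (u : ℝ → E2) : ℝ≥0∞ := ∑' k, ENNReal.ofReal (sobSummand σ u k)

theorem sobSummand_nonneg (σ : ℝ) (u : ℝ → E2) (k : ℤ) : 0 ≤ sobSummand σ u k := by
  have := coefSq_nonneg u k
  unfold sobSummand
  positivity

theorem one_le_abs_intCast {k : ℤ} (hk : k ≠ 0) : 1 ≤ |(k : ℝ)| := by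
  exact_mod_cast Int.one_le_abs hk

theorem sobSummand_congr_ae (huv : u =ᵐ[volume] v) (σ : ℝ) : sobSummand σ u = sobSummand σ v := by
  funext k
  rw [sobSummand, sobSummand, coefSq_congr_ae huv]

theorem sobEnergy_mono_order (hστ : σ ≤ τ) (u : ℝ → E2) : sobEnergy σ u ≤ sobEnergy τ u := by
  refine ENNReal.tsum_le_tsum fun k => ENNReal.ofReal_le_ofReal ?_
  unfold sobSummand
  split_ifs with hk
  · rfl
  · have := coefSq_nonneg u k
    gcongr
    exact one_le_abs_intCast hk

theorem IsPrimitive.sobSummand_eq (hfg : IsPrimitive f g) (hper : Function.Periodic f (2 * π))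
    (σ : ℝ) : sobSummand σ g = sobSummand (σ + 1) f := by
  funext k
  unfold sobSummand
  split_ifs with hk
  · rfl
  · rw [hfg.coefSq_eq hper, ← mul_assoc, ← rpow_add_natCast
      (zero_lt_one.trans_le (one_le_abs_intCast hk)).ne']
    congr 2
    push_cast
    ring

theorem IsPrimitive.sobEnergy_eq (hfg : IsPrimitive f g) (hper : Function.Periodic f (2 * π))
    (σ : ℝ) : sobEnergy σ g = sobEnergy (σ + 1) f := by
  rw [sobEnergy, sobEnergy, hfg.sobSummand_eq hper]

theorem sobNorm_nonneg (σ : ℝ) (u : ℝ → E2) : 0 ≤ sobNorm σ u := sqrt_nonneg _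

theorem sobEnergy_eq_ofReal_sobNorm_sq (hu : Summable (sobSummand σ u)) :
    sobEnergy σ u = ENNReal.ofReal (sobNorm σ u ^ 2) := by
  rw [sobEnergy, sobNorm, sq_sqrt (tsum_nonneg (sobSummand_nonneg σ u)),
    ENNReal.ofReal_tsum_of_nonneg (sobSummand_nonneg σ u) hu]

theorem summable_sobSummand_of_sobEnergy_ne_top (hu : sobEnergy σ u ≠ ∞) :
    Summable (sobSummand σ u) :=
  (ENNReal.summable_toReal hu).congr fun k => ENNReal.toReal_ofReal (sobSummand_nonneg σ u k)

theorem summable_and_sobNorm_le_of_sobEnergy_le {c : ℝ} (hc : 0 ≤ c)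
    (hv : Summable (sobSummand τ v))
    (huv : sobEnergy σ u ≤ ENNReal.ofReal (c ^ 2) * sobEnergy τ v) :
    Summable (sobSummand σ u) ∧ sobNorm σ u ≤ c * sobNorm τ v := by
  rw [sobEnergy_eq_ofReal_sobNorm_sq hv, ← ENNReal.ofReal_mul (sq_nonneg c), ← mul_pow] at huv
  have hu := summable_sobSummand_of_sobEnergy_ne_top
    (ne_top_of_le_ne_top ENNReal.ofReal_ne_top huv)
  refine ⟨hu, (sq_le_sq₀ (sobNorm_nonneg σ u) (mul_nonneg hc (sobNorm_nonneg τ v))).1 ?_⟩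
  rwa [sobEnergy_eq_ofReal_sobNorm_sq hu, ENNReal.ofReal_le_ofReal_iff (sq_nonneg _)] at huv

/-- The Gagliardo energy of order `θ` of a periodic function over one period. -/
def gagliardoEnergy (θ : ℝ) (u : ℝ → E2) : ℝ≥0∞ :=
  ∫⁻ t in Set.Ioc (-π) π, gagliardoDensity θ u t

theorem lintegral_gagliardoMeasure_increment_coefSq (θ : ℝ) (u : ℝ → E2) (k : ℤ) :
    ∫⁻ h, ENNReal.ofReal ((2 - 2 * cos (k * h)) * coefSq u k) ∂gagliardoMeasure θ
      = cosineConst θ * ENNReal.ofReal (sobSummand θ u k) := by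
  simp only [ENNReal.ofReal_mul' (coefSq_nonneg u k)]
  rw [lintegral_mul_const' _ _ ENNReal.ofReal_ne_top]
  rcases eq_or_ne k 0 with rfl | hk
  · simp [sobSummand]
  · rw [lintegral_gagliardoMeasure_cos_int_mul θ hk, sobSummand, if_neg hk,
      ENNReal.ofReal_mul (by positivity)]
    ring

theorem mul_gagliardoEnergy_eq_mul_sobEnergy (hu_meas : StronglyMeasurable u)
    (hper : Function.Periodic u (2 * π)) (hu : MemLp u 2 (volume.restrict (Set.Ioc (-π) π)))
    (θ : ℝ) :
    ENNReal.ofReal (2 * π) * gagliardoEnergy θ u = cosineConst θ * sobEnergy θ u :=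
  calc ENNReal.ofReal (2 * π) * gagliardoEnergy θ u
      = ∫⁻ h, ENNReal.ofReal (2 * π) * (∫⁻ t in Set.Ioc (-π) π, ‖u (t + h) - u t‖ₑ ^ 2)
          ∂gagliardoMeasure θ := by
        rw [lintegral_const_mul' _ _ ENNReal.ofReal_ne_top, gagliardoEnergy]
        simp only [gagliardoDensity]
        rw [lintegral_lintegral_swap (measurable_enorm_increment_sq hu_meas).aemeasurable]
    _ = ∫⁻ h, ∑' k : ℤ, ENNReal.ofReal ((2 - 2 * cos (k * h)) * coefSq u k)
          ∂gagliardoMeasure θ := by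
        simp only [tsum_ofReal_mul_coefSq_eq_lintegral_increment_sq hu_meas hper hu]
    _ = ∑' k, cosineConst θ * ENNReal.ofReal (sobSummand θ u k) := by
        rw [lintegral_tsum fun k => by fun_prop]
        simp only [lintegral_gagliardoMeasure_increment_coefSq]
    _ = cosineConst θ * sobEnergy θ u := ENNReal.tsum_mul_left

theorem mul_lintegral_increment_sq_le (hu_meas : StronglyMeasurable u)
    (hper : Function.Periodic u (2 * π)) (hu : MemLp u 2 (volume.restrict (Set.Ioc (-π) π)))
    (h : ℝ) :
    ENNReal.ofReal (2 * π) * ∫⁻ t in Set.Ioc (-π) π, ‖u (t + h) - u t‖ₑ ^ 2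
      ≤ ENNReal.ofReal (h ^ 2) * sobEnergy 1 u := by
  rw [← tsum_ofReal_mul_coefSq_eq_lintegral_increment_sq hu_meas hper hu, sobEnergy,
    ← ENNReal.tsum_mul_left]
  refine ENNReal.tsum_le_tsum fun k => ?_
  rw [← ENNReal.ofReal_mul (sq_nonneg h)]
  refine ENNReal.ofReal_le_ofReal ?_
  unfold sobSummand
  split_ifs with hk
  · simp [hk]
  · rw [← mul_assoc, mul_one, rpow_two, sq_abs]
    refine mul_le_mul_of_nonneg_right ?_ (coefSq_nonneg u k)
    linarith [one_sub_sq_div_two_le_cos (x := k * h), mul_pow (k : ℝ) h 2]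

theorem lintegral_enorm_sq_le_of_increment_sq_le {V : Type*} [NormedAddCommGroup V]
    [NormedSpace ℝ V] {p q : ℝ → V} {m : Measure ℝ} {B : ℝ≥0∞} (hp : StronglyMeasurable p)
    (hpq : ∀ᵐ t ∂m, HasDerivAt p (q t) t)
    (hB : ∀ h > 0, ∫⁻ t, ‖p (t + h) - p t‖ₑ ^ 2 ∂m ≤ ENNReal.ofReal (h ^ 2) * B) :
    ∫⁻ t, ‖q t‖ₑ ^ 2 ∂m ≤ B := by
  obtain ⟨h, -, h_pos, h_lim⟩ := exists_seq_strictAnti_tendsto (0 : ℝ)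
  have quotient_tendsto : ∀ᵐ t ∂m,
      Tendsto (fun n => ‖(h n)⁻¹ • (p (t + h n) - p t)‖ₑ ^ 2) atTop (𝓝 (‖q t‖ₑ ^ 2)) := by
    filter_upwards [hpq] with t ht
    have slopes := ht.tendsto_slope_zero.comp
      (tendsto_nhdsWithin_iff.2 ⟨h_lim, Eventually.of_forall fun n => (h_pos n).ne'⟩)
    exact ((ENNReal.continuous_pow 2).comp continuous_enorm).continuousAt.tendsto.comp slopes
  have quotient_le (n : ℕ) : ∫⁻ t, ‖(h n)⁻¹ • (p (t + h n) - p t)‖ₑ ^ 2 ∂m ≤ B := by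
    have scale : ‖(h n)⁻¹‖ₑ ^ 2 * ENNReal.ofReal (h n ^ 2) = 1 := by
      rw [enorm_sq_eq_ofReal_norm_sq, norm_eq_abs, sq_abs,
        ← ENNReal.ofReal_mul (sq_nonneg (h n)⁻¹), ← mul_pow, inv_mul_cancel₀ (h_pos n).ne',
        one_pow, ENNReal.ofReal_one]
    simp only [enorm_smul, mul_pow]
    rw [lintegral_const_mul' _ _ (by finiteness)]
    calc ‖(h n)⁻¹‖ₑ ^ 2 * ∫⁻ t, ‖p (t + h n) - p t‖ₑ ^ 2 ∂m
        ≤ ‖(h n)⁻¹‖ₑ ^ 2 * (ENNReal.ofReal (h n ^ 2) * B) := by gcongr; exact hB _ (h_pos n)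
      _ = B := by rw [← mul_assoc, scale, one_mul]
  calc ∫⁻ t, ‖q t‖ₑ ^ 2 ∂m
      = ∫⁻ t, liminf (fun n => ‖(h n)⁻¹ • (p (t + h n) - p t)‖ₑ ^ 2) atTop ∂m :=
        lintegral_congr_ae (quotient_tendsto.mono fun t ht => ht.liminf_eq.symm)
    _ ≤ liminf (fun n => ∫⁻ t, ‖(h n)⁻¹ • (p (t + h n) - p t)‖ₑ ^ 2 ∂m) atTop :=
        lintegral_liminf_le fun n => (((hp.comp_measurable (measurable_add_const (h n))).sub
          hp).const_smul (h n)⁻¹).enorm.pow_const 2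
    _ ≤ B := liminf_le_of_frequently_le' (Eventually.of_forall quotient_le).frequently

theorem IsPrimitive.continuous {V : Type*} [NormedAddCommGroup V] [NormedSpace ℝ V] {p q : ℝ → V}
    (hpq : IsPrimitive p q) : Continuous p :=
  continuous_iff_continuousAt.2 fun t =>
    (hpq.absolutelyContinuousOnInterval (t - 1) (t + 1)).continuousOn.continuousAt <| by
      rw [Set.uIcc_of_le (by linarith)]
      exact Icc_mem_nhds (sub_one_lt t) (lt_add_one t)

theorem memLp_restrict_Ioc_of_continuous {V : Type*} [NormedAddCommGroup V] {p : ℝ → V}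
    (hp : Continuous p) (r : ℝ≥0∞) (a b : ℝ) : MemLp p r (volume.restrict (Set.Ioc a b)) := by
  obtain ⟨C, hC⟩ := isCompact_Icc.exists_bound_of_continuousOn (s := Set.Icc a b) hp.continuousOn
  exact MemLp.of_bound hp.aestronglyMeasurable C <|
    (ae_restrict_iff' measurableSet_Ioc).2 <|
      ae_of_all _ fun t ht => hC t (Set.Ioc_subset_Icc_self ht)

theorem IsPrimitive.mul_lintegral_enorm_sq_le (hfg : IsPrimitive f g)
    (hper : Function.Periodic f (2 * π)) :
    ENNReal.ofReal (2 * π) * ∫⁻ t in Set.Ioc (-π) π, ‖g t‖ₑ ^ 2 ≤ sobEnergy 1 f := by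
  rw [← smul_eq_mul, ← lintegral_smul_measure]
  refine lintegral_enorm_sq_le_of_increment_sq_le hfg.continuous.stronglyMeasurable
    (Measure.ae_smul_measure (ae_restrict_of_ae hfg.ae_hasDerivAt) _) fun h _ => ?_
  rw [lintegral_smul_measure]
  exact mul_lintegral_increment_sq_le hfg.continuous.stronglyMeasurable hper
    (memLp_restrict_Ioc_of_continuous hfg.continuous _ _ _) h

end SobolevEnergy

section ElasticForceEnergy

variable {Y f g u : ℝ → E2} {S Sp Ss : ℝ → ℝ → ℝ} {lam M μ θ σ : ℝ}

theorem intervalIntegrable_and_normL2v_le_of_lintegral_le {c : ℝ} (hc : 0 ≤ c)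
    (hu : AEStronglyMeasurable u volume) (hY : Summable (sobSummand σ Y))
    (huY : ENNReal.ofReal (2 * π) * ∫⁻ t in Set.Ioc (-π) π, ‖u t‖ₑ ^ 2
      ≤ ENNReal.ofReal (c ^ 2) * sobEnergy σ Y) :
    IntervalIntegrable (fun s => ‖u s‖ ^ 2) volume (-π) π ∧ normL2v u ≤ c * sobNorm σ Y := by
  have energy_le : ∫⁻ t in Set.Ioc (-π) π, ENNReal.ofReal (‖u t‖ ^ 2)
      ≤ ENNReal.ofReal ((c * sobNorm σ Y) ^ 2) := by
    simp only [← enorm_sq_eq_ofReal_norm_sq]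
    rw [mul_pow, ENNReal.ofReal_mul (sq_nonneg c), ← sobEnergy_eq_ofReal_sobNorm_sq hY]
    refine le_trans (le_mul_of_one_le_left' ?_) huY
    exact ENNReal.one_le_ofReal.2 (by linarith [pi_gt_three])
  have measurable_sq : AEStronglyMeasurable (fun s => ‖u s‖ ^ 2)
      (volume.restrict (Set.Ioc (-π) π)) := (hu.norm.pow 2).restrict
  have nonneg_sq : 0 ≤ᵐ[volume.restrict (Set.Ioc (-π) π)] fun s => ‖u s‖ ^ 2 :=
    ae_of_all _ fun s => sq_nonneg ‖u s‖
  constructor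
  · rw [intervalIntegrable_iff_integrableOn_Ioc_of_le (neg_le_self pi_pos.le)]
    refine ⟨measurable_sq, ?_⟩
    rw [hasFiniteIntegral_iff_ofReal nonneg_sq]
    exact energy_le.trans_lt ENNReal.ofReal_lt_top
  · refine sqrt_le_iff.2 ⟨mul_nonneg hc (sobNorm_nonneg σ Y), ?_⟩
    rw [intervalIntegral.integral_of_le (neg_le_self pi_pos.le),
      integral_eq_lintegral_of_nonneg_ae nonneg_sq measurable_sq]
    exact ENNReal.toReal_le_of_le_ofReal (sq_nonneg _) energy_le

theorem memLp_two_of_mul_lintegral_enorm_sq_ne_top (hu_meas : AEStronglyMeasurable u volume)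
    (hu : ENNReal.ofReal (2 * π) * ∫⁻ t in Set.Ioc (-π) π, ‖u t‖ₑ ^ 2 ≠ ∞) :
    MemLp u 2 (volume.restrict (Set.Ioc (-π) π)) := by
  refine ⟨hu_meas.restrict, ?_⟩
  rw [eLpNorm_lt_top_iff_lintegral_rpow_enorm_lt_top two_ne_zero ENNReal.ofNat_ne_top]
  simpa using ENNReal.lt_top_of_mul_ne_top_right hu (by simp [pi_pos])

theorem IsPrimitive.mul_lintegral_gagliardoDensity_add_enorm_sq_le (hfg : IsPrimitive f g)
    (hg : StronglyMeasurable g) (hf_per : Function.Periodic f (2 * π))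
    (hg_per : Function.Periodic g (2 * π)) (hθ : 0 ≤ θ) (hf : sobEnergy (θ + 1) f ≠ ∞) :
    ENNReal.ofReal (2 * π) * ∫⁻ t in Set.Ioc (-π) π, (gagliardoDensity θ g t + ‖g t‖ₑ ^ 2)
      ≤ (cosineConst θ + 1) * sobEnergy (θ + 1) f := by
  have L2_le : ENNReal.ofReal (2 * π) * ∫⁻ t in Set.Ioc (-π) π, ‖g t‖ₑ ^ 2
      ≤ sobEnergy (θ + 1) f :=
    (hfg.mul_lintegral_enorm_sq_le hf_per).trans (sobEnergy_mono_order (by linarith) f)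
  have g_mem := memLp_two_of_mul_lintegral_enorm_sq_ne_top hg.aestronglyMeasurable
    (ne_top_of_le_ne_top hf L2_le)
  rw [lintegral_add_left (measurable_gagliardoDensity hg), mul_add, add_mul, one_mul,
    ← gagliardoEnergy.eq_1, mul_gagliardoEnergy_eq_mul_sobEnergy hg hg_per g_mem,
    hfg.sobEnergy_eq hf_per]
  gcongr

theorem IsElasticTension.deriv_ae_eq_elasticForce (hS : IsElasticTension S Sp Ss lam M μ)
    (hlam : 0 < lam) (hf : ∀ s, ‖f s‖ ∈ Set.Icc lam M) (hfg : IsPrimitive f g) :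
    deriv (fun s => S ‖f s‖ s • f s) =ᵐ[volume] elasticForce S Sp Ss f g := by
  filter_upwards [hfg.ae_hasDerivAt] with t ht
  exact (hS.hasDerivAt_elasticForce ht (norm_pos_iff.1 (hlam.trans_le (hf t).1))).deriv

theorem IsElasticTension.mul_lintegral_elasticForce_sq_le (hS : IsElasticTension S Sp Ss lam M μ)
    (hlam : 0 < lam) (hf : ∀ s, ‖f s‖ ∈ Set.Icc lam M) (hYf : IsPrimitive Y f)
    (hfg : IsPrimitive f g) (hY_per : Function.Periodic Y (2 * π))
    (hf_per : Function.Periodic f (2 * π)) :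
    ENNReal.ofReal (2 * π) * ∫⁻ t in Set.Ioc (-π) π, ‖elasticForce S Sp Ss f g t‖ₑ ^ 2
      ≤ ENNReal.ofReal ((2 * μ) ^ 2) * sobEnergy 2 Y := by
  have pointwise (t : ℝ) : ‖elasticForce S Sp Ss f g t‖ₑ ^ 2
      ≤ ENNReal.ofReal (2 * μ ^ 2) * (‖f t‖ₑ ^ 2 + ‖g t‖ₑ ^ 2) := by
    simp only [enorm_sq_eq_ofReal_norm_sq]
    rw [← ENNReal.ofReal_add (sq_nonneg _) (sq_nonneg _), ← ENNReal.ofReal_mul (by positivity)]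
    refine ENNReal.ofReal_le_ofReal ?_
    calc ‖elasticForce S Sp Ss f g t‖ ^ 2
        ≤ (μ * ‖f t‖ + μ * ‖g t‖) ^ 2 := by
          gcongr
          exact hS.norm_elasticForce_le hlam hf t
      _ ≤ 2 * μ ^ 2 * (‖f t‖ ^ 2 + ‖g t‖ ^ 2) := by
          nlinarith [sq_nonneg (μ * ‖f t‖ - μ * ‖g t‖)]
  have f_le : ENNReal.ofReal (2 * π) * ∫⁻ t in Set.Ioc (-π) π, ‖f t‖ₑ ^ 2 ≤ sobEnergy 2 Y :=
    (hYf.mul_lintegral_enorm_sq_le hY_per).trans (sobEnergy_mono_order one_le_two Y)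
  have g_le : ENNReal.ofReal (2 * π) * ∫⁻ t in Set.Ioc (-π) π, ‖g t‖ₑ ^ 2 ≤ sobEnergy 2 Y := by
    simpa only [hYf.sobEnergy_eq hY_per, one_add_one_eq_two]
      using hfg.mul_lintegral_enorm_sq_le hf_per
  calc ENNReal.ofReal (2 * π) * ∫⁻ t in Set.Ioc (-π) π, ‖elasticForce S Sp Ss f g t‖ₑ ^ 2
      ≤ ENNReal.ofReal (2 * π) * ∫⁻ t in Set.Ioc (-π) π,
          ENNReal.ofReal (2 * μ ^ 2) * (‖f t‖ₑ ^ 2 + ‖g t‖ₑ ^ 2) := by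
        gcongr
        exact pointwise _
    _ = ENNReal.ofReal (2 * μ ^ 2)
          * (ENNReal.ofReal (2 * π) * (∫⁻ t in Set.Ioc (-π) π, ‖f t‖ₑ ^ 2)
            + ENNReal.ofReal (2 * π) * ∫⁻ t in Set.Ioc (-π) π, ‖g t‖ₑ ^ 2) := by
        rw [lintegral_const_mul' _ _ ENNReal.ofReal_ne_top, lintegral_add_left
          (hfg.continuous.enorm.measurable.pow_const 2)]
        ring
    _ ≤ ENNReal.ofReal (2 * μ ^ 2) * (sobEnergy 2 Y + sobEnergy 2 Y) := by gcongr
    _ = ENNReal.ofReal ((2 * μ) ^ 2) * sobEnergy 2 Y := by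
        rw [← two_mul, ← mul_assoc, show (2 * μ) ^ 2 = 2 * μ ^ 2 * 2 by ring,
          ENNReal.ofReal_mul (p := 2 * μ ^ 2) (by positivity), ENNReal.ofReal_ofNat]

theorem IsElasticTension.mul_gagliardoEnergy_elasticForce_le
    (hS : IsElasticTension S Sp Ss lam M μ) (hlam : 0 < lam) (hμ : 0 < μ)
    (hf : ∀ s, ‖f s‖ ∈ Set.Icc lam M) (hYf : IsPrimitive Y f) (hfg : IsPrimitive f g)
    (hg : StronglyMeasurable g) (hY_per : Function.Periodic Y (2 * π))
    (hf_per : Function.Periodic f (2 * π)) (hg_per : Function.Periodic g (2 * π)) (hθ : 0 ≤ θ)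
    (hY : sobEnergy (2 + θ) Y ≠ ∞) :
    ENNReal.ofReal (2 * π) * gagliardoEnergy θ (elasticForce S Sp Ss f g)
      ≤ ENNReal.ofReal (600 * μ ^ 2) * productConst θ
        * (2 * ((cosineConst θ + 1) * sobEnergy (2 + θ) Y)) := by
  have order_le : sobEnergy (θ + 1) Y ≤ sobEnergy (2 + θ) Y :=
    sobEnergy_mono_order (by linarith) Y
  have order_eq : sobEnergy (θ + 1) f = sobEnergy (2 + θ) Y := by
    rw [hYf.sobEnergy_eq hY_per, show θ + 1 + 1 = 2 + θ by ring]
  have f_part := (hYf.mul_lintegral_gagliardoDensity_add_enorm_sq_le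
    hfg.continuous.stronglyMeasurable hY_per hf_per hθ (ne_top_of_le_ne_top hY order_le)).trans
    (mul_le_mul_right order_le _)
  have g_part := hfg.mul_lintegral_gagliardoDensity_add_enorm_sq_le hg hf_per hg_per hθ
    (order_eq.trans_ne hY)
  rw [order_eq] at g_part
  have f_meas : Measurable fun t => gagliardoDensity θ f t + ‖f t‖ₑ ^ 2 :=
    (measurable_gagliardoDensity hfg.continuous.stronglyMeasurable).add
      (hfg.continuous.enorm.measurable.pow_const 2)
  have g_meas : Measurable fun t => gagliardoDensity θ g t + ‖g t‖ₑ ^ 2 :=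
    (measurable_gagliardoDensity hg).add (hg.enorm.pow_const 2)
  calc ENNReal.ofReal (2 * π) * gagliardoEnergy θ (elasticForce S Sp Ss f g)
      ≤ ENNReal.ofReal (2 * π) * ∫⁻ t in Set.Ioc (-π) π, ENNReal.ofReal (600 * μ ^ 2)
          * productConst θ
          * (gagliardoDensity θ f t + ‖f t‖ₑ ^ 2 + (gagliardoDensity θ g t + ‖g t‖ₑ ^ 2)) := by
        unfold gagliardoEnergy
        gcongr with t
        exact hS.gagliardoDensity_elasticForce_le hlam hμ hf hfg.continuous hfg hg hθ t
    _ = ENNReal.ofReal (600 * μ ^ 2) * productConst θ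
          * (ENNReal.ofReal (2 * π) * (∫⁻ t in Set.Ioc (-π) π,
              (gagliardoDensity θ f t + ‖f t‖ₑ ^ 2))
            + ENNReal.ofReal (2 * π) * ∫⁻ t in Set.Ioc (-π) π,
              (gagliardoDensity θ g t + ‖g t‖ₑ ^ 2)) := by
        rw [lintegral_const_mul _ (by exact f_meas.add g_meas), lintegral_add_left f_meas]
        ring
    _ ≤ ENNReal.ofReal (600 * μ ^ 2) * productConst θ
          * (2 * ((cosineConst θ + 1) * sobEnergy (2 + θ) Y)) := by
        rw [two_mul (_ * sobEnergy _ _)]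
        exact mul_le_mul_right (add_le_add f_part g_part) _

/-- The constant `Cθ` of the fractional estimate: the product and composition estimates cost
`productConst θ`, and passing between Fourier and Gagliardo seminorms costs `cosineConst θ`. -/
def forceConst (θ : ℝ) : ℝ :=
  √(600 * productConst θ * (2 * (cosineConst θ + 1)) / cosineConst θ).toReal

theorem cosineConst_mul_ofReal_forceConst_sq (hθ0 : 0 < θ) (hθ1 : θ < 1) :
    cosineConst θ * ENNReal.ofReal (forceConst θ ^ 2)
      = 600 * productConst θ * (2 * (cosineConst θ + 1)) := by
  have := productConst_ne_top hθ0 hθ1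
  have c_ne_top := cosineConst_ne_top hθ0 hθ1
  have c_ne_zero := cosineConst_ne_zero θ
  rw [forceConst, sq_sqrt ENNReal.toReal_nonneg, ENNReal.ofReal_toReal (by finiteness),
    ENNReal.mul_div_cancel c_ne_zero c_ne_top]

theorem forceConst_pos (hθ0 : 0 < θ) (hθ1 : θ < 1) : 0 < forceConst θ := by
  have nonneg : 0 ≤ forceConst θ := sqrt_nonneg _
  refine nonneg.lt_of_ne' fun h => ?_
  simpa [h, productConst_ne_zero] using cosineConst_mul_ofReal_forceConst_sq hθ0 hθ1

theorem IsElasticTension.sobEnergy_deriv_le (hS : IsElasticTension S Sp Ss lam M μ)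
    (hS_per : ∀ p s, S p (s + 2 * π) = S p s) (hlam : 0 < lam) (hμ : 0 < μ)
    (hf : ∀ s, ‖f s‖ ∈ Set.Icc lam M) (hYf : IsPrimitive Y f) (hfg : IsPrimitive f g)
    (hY_per : Function.Periodic Y (2 * π)) (hf_per : Function.Periodic f (2 * π)) (hθ0 : 0 < θ)
    (hθ1 : θ < 1) (hY : sobEnergy (2 + θ) Y ≠ ∞) :
    sobEnergy θ (deriv fun s => S ‖f s‖ s • f s)
      ≤ ENNReal.ofReal ((forceConst θ * μ) ^ 2) * sobEnergy (2 + θ) Y := by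
  set Φ := deriv fun s => S ‖f s‖ s • f s
  have Φ_ae : Φ =ᵐ[volume] elasticForce S Sp Ss f (deriv f) :=
    hS.deriv_ae_eq_elasticForce hlam hf hfg.deriv
  have Φ_meas : StronglyMeasurable Φ := stronglyMeasurable_deriv _
  have Φ_per : Function.Periodic Φ (2 * π) :=
    periodic_deriv fun s => by simp only [hf_per s, hS_per]
  have Φ_mem : MemLp Φ 2 (volume.restrict (Set.Ioc (-π) π)) := by
    refine memLp_two_of_mul_lintegral_enorm_sq_ne_top Φ_meas.aestronglyMeasurable ?_
    rw [lintegral_congr_ae (ae_restrict_of_ae (Φ_ae.mono fun t ht => by rw [ht]))]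
    exact ne_top_of_le_ne_top
      (ENNReal.mul_ne_top ENNReal.ofReal_ne_top
        (ne_top_of_le_ne_top hY (sobEnergy_mono_order (by linarith) Y)))
      (hS.mul_lintegral_elasticForce_sq_le hlam hf hYf hfg.deriv hY_per hf_per)
  have energy_eq : gagliardoEnergy θ Φ = gagliardoEnergy θ (elasticForce S Sp Ss f (deriv f)) :=
    lintegral_congr_ae (ae_restrict_of_ae (Φ_ae.mono fun t => gagliardoDensity_congr Φ_ae))
  have energy_le := hS.mul_gagliardoEnergy_elasticForce_le hlam hμ hf hYf hfg.deriv
    (stronglyMeasurable_deriv f) hY_per hf_per (periodic_deriv hf_per) hθ0.le hY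
  rw [← energy_eq, mul_gagliardoEnergy_eq_mul_sobEnergy Φ_meas Φ_per Φ_mem] at energy_le
  rw [← ENNReal.mul_le_mul_iff_right (cosineConst_ne_zero θ) (cosineConst_ne_top hθ0 hθ1)]
  refine energy_le.trans_eq ?_
  rw [mul_pow, ENNReal.ofReal_mul (sq_nonneg _), mul_assoc (ENNReal.ofReal _) (ENNReal.ofReal _),
    ← mul_assoc (cosineConst θ), cosineConst_mul_ofReal_forceConst_sq hθ0 hθ1,
    ENNReal.ofReal_mul (by norm_num), ENNReal.ofReal_ofNat]
  ring

end ElasticForceEnergy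

section Curve

variable {Y f : ℝ → E2} {lam : ℝ}

theorem norm_le_normLinf (hf : Continuous f) (hper : Function.Periodic f (2 * π)) (s : ℝ) :
    ‖f s‖ ≤ normLinf f := by
  obtain ⟨C, hC⟩ := (isBounded_iff_forall_norm_le).1
    (hper.isBounded_of_continuous two_pi_pos.ne' hf)
  exact le_ciSup (f := fun s => ‖f s‖) ⟨C, Set.forall_mem_range.2 fun t => hC _ ⟨t, rfl⟩⟩ s

theorem le_norm_deriv_of_wellStretched {f' : E2} {s : ℝ} (hY : HasDerivAt Y f' s)
    (hstretch : ∀ s₁ s₂ : ℝ, |s₁ - s₂| ≤ π → lam * |s₁ - s₂| ≤ ‖Y s₁ - Y s₂‖) : lam ≤ ‖f'‖ := by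
  refine ge_of_tendsto (hasDerivAt_iff_tendsto_slope.1 hY).norm ?_
  filter_upwards [self_mem_nhdsWithin, mem_nhdsWithin_of_mem_nhds (Metric.ball_mem_nhds s pi_pos)]
    with x hxs hx
  rw [slope_def_module, norm_smul, norm_inv, norm_eq_abs, inv_mul_eq_div,
    le_div_iff₀ (abs_pos.2 (sub_ne_zero.2 hxs))]
  exact hstretch x s (Metric.mem_ball.1 hx).le

end Curve

theorem statement1_general :
    ∃ C : ℝ, 0 < C ∧
      ∀ θ : ℝ, 0 < θ → θ < 1 →
        ∃ Cθ : ℝ, 0 < Cθ ∧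
          ∀ (Y Y' Y'' F : ℝ → E2) (S Sp Ss : ℝ → ℝ → ℝ) (lam M μ : ℝ),
            0 < lam → 0 < μ →
            Function.Periodic Y (2 * π) →
            (∀ s, HasDerivAt Y (Y' s) s) →
            IsPrimitive Y' Y'' →
            (∀ s, ‖Y' s‖ ∈ Set.Icc lam M) →
            Summable (sobSummand (2 + θ) Y) →
            (∀ p s, S p (s + 2 * π) = S p s) →
            IsElasticTension S Sp Ss lam M μ →
            (∀ᵐ s, HasDerivAt (fun u => S ‖Y' u‖ u • Y' u) (F s) s) →
            IntervalIntegrable (fun s => ‖F s‖ ^ 2) volume (-π) π ∧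
            normL2v F ≤ C * μ * sobNorm 2 Y ∧
            Summable (sobSummand θ F) ∧
            sobNorm θ F ≤ Cθ * μ * sobNorm (2 + θ) Y := by
  refine ⟨2, two_pos, fun θ hθ0 hθ1 => ⟨forceConst θ, forceConst_pos hθ0 hθ1, ?_⟩⟩
  intro Y Y' Y'' F S Sp Ss lam M μ hlam hμ hY_per hY hY' hY'_mem hY_sum hS_per hS hF
  have hYY' := isPrimitive_of_hasDerivAt hY hY'.continuous
  have hY'_per := periodic_of_hasDerivAt hY_per hY
  have hY_energy : sobEnergy (2 + θ) Y ≠ ∞ :=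
    (sobEnergy_eq_ofReal_sobNorm_sq hY_sum).trans_ne ENNReal.ofReal_ne_top
  have F_ae : F =ᵐ[volume] deriv fun u => S ‖Y' u‖ u • Y' u := hF.mono fun _ hs => hs.deriv.symm
  have hY_sum_two : Summable (sobSummand 2 Y) := summable_sobSummand_of_sobEnergy_ne_top
    (ne_top_of_le_ne_top hY_energy (sobEnergy_mono_order (by linarith) Y))
  have L2_bound := intervalIntegrable_and_normL2v_le_of_lintegral_le (u := F) (c := 2 * μ)
    (by positivity) ((stronglyMeasurable_deriv _).aestronglyMeasurable.congr F_ae.symm) hY_sum_two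
    (by
      rw [lintegral_congr_ae (ae_restrict_of_ae
        ((F_ae.trans (hS.deriv_ae_eq_elasticForce hlam hY'_mem hY')).mono fun t ht => by rw [ht]))]
      exact hS.mul_lintegral_elasticForce_sq_le hlam hY'_mem hYY' hY' hY_per hY'_per)
  refine ⟨L2_bound.1, L2_bound.2, ?_⟩
  refine summable_and_sobNorm_le_of_sobEnergy_le (mul_pos (forceConst_pos hθ0 hθ1) hμ).le hY_sum ?_
  rw [sobEnergy, sobSummand_congr_ae F_ae]
  exact hS.sobEnergy_deriv_le hS_per hlam hμ hY'_mem hYY' hY' hY_per hY'_per hθ0 hθ1 hY_energy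

/-- `L²` and `Ḣ^θ` bounds for the elastic force density
`F_Y(s) = d/ds [S(|Y'(s)|, s) Y'(s)]`. -/
theorem statement1 :
    ∃ C : ℝ, 0 < C ∧
      ∀ θ : ℝ, 0 < θ → θ < 1 →
        ∃ Cθ : ℝ, 0 < Cθ ∧
          ∀ (Y Y' Y'' F : ℝ → E2) (S Sp Ss : ℝ → ℝ → ℝ) (lam μ : ℝ),
            0 < lam → 0 < μ →
            Function.Periodic Y (2 * π) →
            (∀ s, HasDerivAt Y (Y' s) s) →
            Continuous Y' →
            LocallyIntegrable Y'' volume →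
            (∀ a b : ℝ, a ≤ b → Y' b - Y' a = ∫ u in a..b, Y'' u) →
            -- well-stretched condition with constant `lam`
            (∀ s₁ s₂ : ℝ, |s₁ - s₂| ≤ π → lam * |s₁ - s₂| ≤ ‖Y s₁ - Y s₂‖) →
            -- `‖Y‖_{Ḣ^{2+θ}(𝕋)} < ∞`
            Summable (sobSummand (2 + θ) Y) →
            -- `S` is `2π`-periodic in its second argument
            (∀ p s, S p (s + 2 * π) = S p s) →
            -- `S` is continuously differentiable on `(0,∞) × ℝ`, with partial
            -- derivatives `Sp` and `Ss`
            (∀ p s, 0 < p → HasDerivAt (fun q => S q s) (Sp p s) p) →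
            (∀ p s, 0 < p → HasDerivAt (fun t => S p t) (Ss p s) s) →
            ContinuousOn (fun q : ℝ × ℝ => S q.1 q.2) (Set.Ioi 0 ×ˢ Set.univ) →
            ContinuousOn (fun q : ℝ × ℝ => Sp q.1 q.2) (Set.Ioi 0 ×ˢ Set.univ) →
            ContinuousOn (fun q : ℝ × ℝ => Ss q.1 q.2) (Set.Ioi 0 ×ˢ Set.univ) →
            -- the `C⁰` and `C¹` bound for `S` with constant `μ`
            (∀ p s, lam ≤ p → p ≤ normLinf Y' →
              |S p s| + |Ss p s| + normLinf Y' * |Sp p s| ≤ μ) →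
            -- the `C^{1,1}`-type bound for `S` with constant `μ`
            (∀ p₁ p₂ s₁ s₂ : ℝ, lam ≤ p₁ → p₁ ≤ normLinf Y' → lam ≤ p₂ → p₂ ≤ normLinf Y' →
              |Ss p₁ s₁ - Ss p₂ s₂| + normLinf Y' * |Sp p₁ s₁ - Sp p₂ s₂|
                ≤ μ * (|s₁ - s₂| + (normLinf Y')⁻¹ * |p₁ - p₂|)) →
            -- `F` is the a.e. derivative of `s ↦ S(|Y'(s)|,s) Y'(s)`
            (∀ᵐ s ∂(volume : Measure ℝ), HasDerivAt (fun u => S ‖Y' u‖ u • Y' u) (F s) s) →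
            -- conclusion: `F ∈ L²(𝕋)` with the stated bounds
            IntervalIntegrable (fun s => ‖F s‖ ^ 2) volume (-π) π ∧
            normL2v F ≤ C * μ * sobNorm 2 Y ∧
            Summable (sobSummand θ F) ∧
            sobNorm θ F ≤ Cθ * μ * sobNorm (2 + θ) Y := by
  obtain ⟨C, hC, h⟩ := statement1_general
  refine ⟨C, hC, fun θ hθ0 hθ1 => (h θ hθ0 hθ1).imp fun Cθ => And.imp_right fun hCθ => ?_⟩
  intro Y Y' Y'' F S Sp Ss lam μ hlam hμ hY_per hY hY'_cont hY''_int hY'_sub hstretch hY_sum hS_per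
    hSp hSs _ hSp_cont hSs_cont hbound hlip hF
  have hY'_per := periodic_of_hasDerivAt hY_per hY
  exact hCθ Y Y' Y'' F S Sp Ss lam (normLinf Y') μ hlam hμ hY_per hY ⟨hY''_int, hY'_sub⟩
    (fun s => ⟨le_norm_deriv_of_wellStretched (hY s) hstretch, norm_le_normLinf hY'_cont hY'_per s⟩)
    hY_sum hS_per ⟨hSp, hSs, hSp_cont, hSs_cont, hbound, hlip⟩ hF
end
end

section
/- Let ϕ, φ, φ̂, f₁, f₂, f₃ be as in the context. Then f₂ and f₃ are twice continuously differentiable on ℝ, and there exists a constant C > 0 (depending on ϕ) such that for k = 0, 1, 2 and all x ∈ ℝ: |f₂^{(k)}(x)| + |f₃^{(k)}(x)| ≤ C / (1 + |x|^{k+2}), where f^{(k)} denotes the k-th derivative. -/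
open MeasureTheory Real Filter Topology
open scoped ENNReal

noncomputable section

/-- Convolution on `ℝ²`: `(ϕ∗ϕ)(x) = ∫ ϕ(y) ϕ(x−y) dy`. -/
def conv2 (ϕ : ℝ × ℝ → ℝ) (x : ℝ × ℝ) : ℝ := ∫ y : ℝ × ℝ, ϕ y * ϕ (x - y)

/-- The Fourier transform on `ℝ²`: `ĝ(ξ) = ∫ g(x) e^{−i x·ξ} dx`. -/
def ft2 (g : ℝ × ℝ → ℝ) (ξ : ℝ × ℝ) : ℂ :=
  ∫ x : ℝ × ℝ, (g x : ℂ) * Complex.exp (-Complex.I * ((x.1 : ℂ) * (ξ.1 : ℂ) + (x.2 : ℂ) * (ξ.2 : ℂ)))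

/-- `f₁(x) = (x/π) ∫_{ℝ²} e^{ixη₁} (−i η₁ η₂²)/(η₁²+η₂²)² φ̂(η) dη` with `φ = ϕ∗ϕ`. -/
def f1 (ϕ : ℝ × ℝ → ℝ) (x : ℝ) : ℂ :=
  ((x / π : ℝ) : ℂ) * ∫ η : ℝ × ℝ,
    Complex.exp (Complex.I * (x : ℂ) * (η.1 : ℂ)) *
      (-Complex.I * (η.1 : ℂ) * (η.2 : ℂ) ^ 2 / ((η.1 : ℂ) ^ 2 + (η.2 : ℂ) ^ 2) ^ 2) *
      ft2 (conv2 ϕ) η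

/-- `f₂(x) = (x/π) ∫_{ℝ²} e^{ixη₁} (−i η₁ (η₁²−η₂²))/(η₁²+η₂²)² φ̂(η) dη` with `φ = ϕ∗ϕ`. -/
def f2 (ϕ : ℝ × ℝ → ℝ) (x : ℝ) : ℂ :=
  ((x / π : ℝ) : ℂ) * ∫ η : ℝ × ℝ,
    Complex.exp (Complex.I * (x : ℂ) * (η.1 : ℂ)) *
      (-Complex.I * (η.1 : ℂ) * ((η.1 : ℂ) ^ 2 - (η.2 : ℂ) ^ 2) /
        ((η.1 : ℂ) ^ 2 + (η.2 : ℂ) ^ 2) ^ 2) *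
      ft2 (conv2 ϕ) η

/-- `f₃ = f₁ − 1`. -/
def f3 (ϕ : ℝ × ℝ → ℝ) (x : ℝ) : ℂ := f1 ϕ x - 1

/-- `m₁ = ∫_{ℝ²} |x| (ϕ∗ϕ)(x) dx`. -/
def m1 (ϕ : ℝ × ℝ → ℝ) : ℝ := ∫ x : ℝ × ℝ, Real.sqrt (x.1 ^ 2 + x.2 ^ 2) * conv2 ϕ x

/-- `m₂ = ∫_{ℝ²} |x|² (ϕ∗ϕ)(x) dx`. -/
def m2 (ϕ : ℝ × ℝ → ℝ) : ℝ := ∫ x : ℝ × ℝ, (x.1 ^ 2 + x.2 ^ 2) * conv2 ϕ x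

/-! Write `φ = ϕ ∗ ϕ`. The functions `-i η₁ / |η|²` and `-i η₁ η₂² / |η|⁴` are the Fourier symbols
`a` of `∂₁ Δ⁻¹` and `b` of `∂₁ ∂₂² Δ⁻²`; `f₁` has kernel `b` and `f₂` has kernel `a - 2 b`. For a
radial amplitude `ψ`, let `A(x)`, `B(x)`, `Ψ(x)` be the integrals of `e^{i x η₁}` against `a ψ`,
`b ψ`, `ψ`. Integrating a suitable angular derivative over each circle `|η| = r` gives
`(x A)' = x Ψ` and `(x³ B)' = x² A`.

For `ψ = φ̂`, Fourier inversion turns the first identity into Gauss' law: `x A / 2π` is the mass of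
`φ` in the disc of radius `|x|`, hence equal to `1` beyond the support of `φ`. The second identity
then makes `x² f₃` constant there, while `f₂ = 2 - 2 f₁ = -2 f₃`. Since `f₂` and `f₃` are smooth and
even, they are exact multiples of `x⁻²` outside a compact set, which bounds every derivative. -/

section PlaneRotation

/-- Rotation of the plane by the angle `θ`. It is transported from the rotations of `ℂ`, since
Mathlib's product norm on `ℝ × ℝ` is not the Euclidean one. -/
def planeRotation (θ : ℝ) : ℝ × ℝ ≃ᵐ ℝ × ℝ :=
  Complex.measurableEquivRealProd.symm.trans
    ((rotation (Circle.exp θ)).toMeasurableEquiv.trans Complex.measurableEquivRealProd)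

theorem planeRotation_apply (θ : ℝ) (p : ℝ × ℝ) :
    planeRotation θ p = (cos θ * p.1 - sin θ * p.2, cos θ * p.2 + sin θ * p.1) := by
  have hcircle : ((Circle.exp θ : Circle) : ℂ) = ⟨cos θ, sin θ⟩ := by
    rw [Circle.coe_exp, Complex.exp_mul_I, ← Complex.ofReal_cos, ← Complex.ofReal_sin]
    apply Complex.ext <;> simp [-Complex.ofReal_cos, -Complex.ofReal_sin]
  change ((rotation (Circle.exp θ) ⟨p.1, p.2⟩).re, (rotation (Circle.exp θ) ⟨p.1, p.2⟩).im) = _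
  rw [rotation_apply, hcircle, Complex.mul_re, Complex.mul_im]

theorem planeRotation_sub (θ : ℝ) (p q : ℝ × ℝ) :
    planeRotation θ (p - q) = planeRotation θ p - planeRotation θ q := by
  simp only [planeRotation_apply, Prod.fst_sub, Prod.snd_sub, Prod.mk_sub_mk, Prod.mk.injEq]
  constructor <;> ring

theorem measurePreserving_planeRotation (θ : ℝ) : MeasurePreserving (planeRotation θ) :=
  (Complex.volume_preserving_equiv_real_prod.symm).trans
    ((rotation (Circle.exp θ)).measurePreserving.trans Complex.volume_preserving_equiv_real_prod)

/-- Invariance under all rotations of the plane: the form in which radial symmetry is used. -/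
def IsRotationInvariant {α : Type*} (f : ℝ × ℝ → α) : Prop :=
  ∀ θ p, f (planeRotation θ p) = f p

theorem isRotationInvariant_of_eq_of_sq_add_sq_eq {α : Type*} {f : ℝ × ℝ → α}
    (hf : ∀ x y : ℝ × ℝ, x.1 ^ 2 + x.2 ^ 2 = y.1 ^ 2 + y.2 ^ 2 → f x = f y) :
    IsRotationInvariant f := fun θ p => hf _ _ <| by
  rw [planeRotation_apply]
  linear_combination (p.1 ^ 2 + p.2 ^ 2) * sin_sq_add_cos_sq θ

namespace IsRotationInvariant

variable {α : Type*} {f : ℝ × ℝ → α}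

theorem apply_polar (hf : IsRotationInvariant f) (r θ : ℝ) :
    f (r * cos θ, r * sin θ) = f (r, 0) := by
  rw [← hf θ (r, 0), planeRotation_apply]
  simp [mul_comm]

theorem apply_neg (hf : IsRotationInvariant f) (p : ℝ × ℝ) : f (-p) = f p := by
  rw [← hf π p, planeRotation_apply]
  congr 1
  simp [Prod.ext_iff]

theorem conv2 {ϕ : ℝ × ℝ → ℝ} (hϕ : IsRotationInvariant ϕ) : IsRotationInvariant (conv2 ϕ) :=
  fun θ p => by
    unfold _root_.conv2
    rw [← (measurePreserving_planeRotation θ).integral_comp']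
    simp only [← planeRotation_sub, hϕ θ _]

theorem ft2 {φ : ℝ × ℝ → ℝ} (hφ : IsRotationInvariant φ) : IsRotationInvariant (ft2 φ) :=
  fun θ ξ => by
    unfold _root_.ft2
    rw [← (measurePreserving_planeRotation θ).integral_comp']
    refine integral_congr_ae (.of_forall fun x => ?_)
    have hdot : (planeRotation θ x).1 * (planeRotation θ ξ).1 +
        (planeRotation θ x).2 * (planeRotation θ ξ).2 = x.1 * ξ.1 + x.2 * ξ.2 := by
      rw [planeRotation_apply, planeRotation_apply]
      linear_combination (x.1 * ξ.1 + x.2 * ξ.2) * sin_sq_add_cos_sq θ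
    simp only [hφ θ x, ← Complex.ofReal_mul, ← Complex.ofReal_add, hdot]

theorem integral_eq {E : Type*} [NormedAddCommGroup E] [NormedSpace ℝ E] {f : ℝ × ℝ → E}
    (hf : IsRotationInvariant f) :
    ∫ p, f p = (2 * π) • ∫ r in Set.Ioi (0 : ℝ), r • f (r, 0) := by
  rw [← integral_comp_polarCoord_symm, polarCoord_target, Measure.volume_eq_prod,
    ← Measure.prod_restrict]
  simp only [polarCoord_symm_apply, hf.apply_polar]
  rw [integral_fun_fst (fun r => r • f (r, 0)), measureReal_restrict_apply_univ,
    Real.volume_real_Ioo_of_le (by linarith [pi_pos])]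
  ring_nf

end IsRotationInvariant

end PlaneRotation

section Convolution

theorem contDiff_conv2 {ϕ : ℝ × ℝ → ℝ} {n : ℕ∞} (hϕ : ContDiff ℝ n ϕ) (hc : HasCompactSupport ϕ) :
    ContDiff ℝ n (conv2 ϕ) :=
  hc.contDiff_convolution_right (ContinuousLinearMap.mul ℝ ℝ) hϕ.continuous.locallyIntegrable hϕ

theorem hasCompactSupport_conv2 {ϕ : ℝ × ℝ → ℝ} (hc : HasCompactSupport ϕ) :
    HasCompactSupport (conv2 ϕ) :=
  hc.convolution (ContinuousLinearMap.mul ℝ ℝ) hc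

theorem integral_conv2 {ϕ : ℝ × ℝ → ℝ} (hϕ : Integrable ϕ) :
    ∫ x, conv2 ϕ x = (∫ x, ϕ x) ^ 2 := by
  rw [sq]
  exact integral_convolution (ContinuousLinearMap.mul ℝ ℝ) hϕ hϕ

end Convolution

section FourierTransform

open scoped FourierTransform SchwartzMap

theorem ft2_eq_fourier (φ : ℝ × ℝ → ℝ) (ξ : ℝ × ℝ) :
    ft2 φ ξ = 𝓕 (fun z : ℂ => (φ (z.re, z.im) : ℂ))
      ((2 * π)⁻¹ • Complex.equivRealProdCLM.symm ξ) := by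
  rw [Real.fourier_eq', ft2, ← Complex.volume_preserving_equiv_real_prod.integral_comp']
  congr! 2 with _
  rw [smul_eq_mul, mul_comm]
  congr! 2
  rw [inner_smul_right, Complex.inner]
  simp only [Complex.measurableEquivRealProd_apply, Complex.mul_re, Complex.conj_re,
    Complex.conj_im, Complex.equivRealProdCLM_symm_apply_re,
    Complex.equivRealProdCLM_symm_apply_im, Complex.ofReal_mul, Complex.ofReal_inv,
    Complex.ofReal_ofNat, Complex.ofReal_neg, Complex.ofReal_add, mul_inv_rev, mul_neg, neg_mul,
    sub_neg_eq_add, neg_inj]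
  field_simp

theorem exists_schwartzMap_fourier_eq_ft2 {φ : ℝ × ℝ → ℝ} (hφ : ContDiff ℝ (⊤ : ℕ∞) φ)
    (hc : HasCompactSupport φ) : ∃ Φ : 𝓢(ℂ, ℂ), (∀ z, Φ z = φ (z.re, z.im)) ∧
      ∀ ξ, ft2 φ ξ = 𝓕 Φ ((2 * π)⁻¹ • Complex.equivRealProdCLM.symm ξ) := by
  have hsmooth : ContDiff ℝ (⊤ : ℕ∞) fun z : ℂ => (φ (Complex.equivRealProdCLM z) : ℂ) :=
    Complex.ofRealCLM.contDiff.comp (hφ.comp Complex.equivRealProdCLM.contDiff)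
  have hsupp : HasCompactSupport fun z : ℂ => (φ (Complex.equivRealProdCLM z) : ℂ) :=
    (hc.comp_homeomorph Complex.equivRealProdCLM.toHomeomorph).comp_left Complex.ofReal_zero
  refine ⟨hsupp.toSchwartzMap hsmooth, fun z => rfl, fun ξ => ?_⟩
  rw [ft2_eq_fourier, SchwartzMap.fourier_coe]
  rfl

theorem exists_schwartzMap_eq_ft2 {φ : ℝ × ℝ → ℝ} (hφ : ContDiff ℝ (⊤ : ℕ∞) φ)
    (hc : HasCompactSupport φ) : ∃ ψ : 𝓢(ℝ × ℝ, ℂ), ⇑ψ = ft2 φ := by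
  obtain ⟨Φ, -, hΦ⟩ := exists_schwartzMap_fourier_eq_ft2 hφ hc
  let dilation : (ℝ × ℝ) ≃L[ℝ] ℂ := Complex.equivRealProdCLM.symm.trans
    (ContinuousLinearEquiv.smulLeft (Units.mk0 (2 * π)⁻¹ (by positivity)))
  exact ⟨SchwartzMap.compCLMOfContinuousLinearEquiv ℂ dilation (𝓕 Φ), funext fun ξ => (hΦ ξ).symm⟩

theorem integral_exp_mul_ft2 {φ : ℝ × ℝ → ℝ} (hφ : ContDiff ℝ (⊤ : ℕ∞) φ)
    (hc : HasCompactSupport φ) (p : ℝ × ℝ) :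
    ∫ η : ℝ × ℝ, Complex.exp (Complex.I * ((p.1 : ℂ) * η.1 + p.2 * η.2)) * ft2 φ η =
      ((2 * π) ^ 2 * φ p : ℝ) := by
  obtain ⟨Φ, hΦ, hft⟩ := exists_schwartzMap_fourier_eq_ft2 hφ hc
  have hinv : (φ p : ℂ) = 𝓕⁻ (𝓕 Φ) (⟨p.1, p.2⟩ : ℂ) := by
    rw [FourierTransform.fourierInv_fourier_eq Φ, hΦ]
  have hscale := Measure.integral_comp_smul (volume : Measure ℂ)
    (fun v : ℂ => Complex.exp (((2 * π * inner ℝ v (⟨p.1, p.2⟩ : ℂ) : ℝ) : ℂ) * Complex.I)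
      • 𝓕 Φ v) ((2 * π)⁻¹)
  have hjacobian : |(((2 * π)⁻¹) ^ 2)⁻¹| = (2 * π) ^ 2 := by
    rw [inv_pow, inv_inv, abs_of_nonneg (by positivity)]
  rw [Complex.finrank_real_complex, hjacobian, ← Real.fourierInv_eq', ← SchwartzMap.fourierInv_coe,
    ← hinv, Complex.real_smul, ← Complex.ofReal_mul] at hscale
  rw [← hscale, ← Complex.volume_preserving_equiv_real_prod.integral_comp']
  congr! 2 with _
  rw [hft, smul_eq_mul]
  congr! 2
  · rw [real_inner_smul_left, Complex.inner]
    simp only [Complex.measurableEquivRealProd_apply, Complex.mul_re, Complex.conj_re,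
      Complex.conj_im, Complex.ofReal_mul, Complex.ofReal_inv, Complex.ofReal_ofNat,
      Complex.ofReal_add, mul_inv_rev, mul_neg, sub_neg_eq_add]
    field_simp

end FourierTransform

section FiniteMoments

open scoped SchwartzMap

theorem integrable_inv_norm_mul_one_add_norm_rpow {E : Type*} [NormedAddCommGroup E]
    [NormedSpace ℝ E] [FiniteDimensional ℝ E] [MeasurableSpace E] [BorelSpace E] (μ : Measure E)
    [μ.IsAddHaarMeasure] (hE : 1 < Module.finrank ℝ E) {r : ℝ} (hr : Module.finrank ℝ E < r + 1) :
    Integrable (fun x : E => ‖x‖⁻¹ * (1 + ‖x‖) ^ (-r)) μ := by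
  have : Nontrivial E := Module.nontrivial_of_finrank_pos (zero_lt_one.trans hE)
  obtain ⟨d, hd⟩ := Nat.exists_eq_add_of_le' hE
  refine (integrable_fun_norm_addHaar μ (f := fun y : ℝ => y⁻¹ * (1 + y) ^ (-r))).2 ?_
  have hdom : Integrable (fun y : ℝ => (1 + ‖y‖) ^ (-(r - d))) :=
    integrable_one_add_norm (by
      rw [hd] at hr
      push_cast at hr
      rw [Module.finrank_self, Nat.cast_one]
      linarith)
  refine hdom.integrableOn.mono' (by fun_prop) ?_
  filter_upwards [ae_restrict_mem measurableSet_Ioi] with y (hy : 0 < y)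
  have hy1 : 0 < 1 + y := by linarith
  rw [Real.norm_of_nonneg (by positivity), Real.norm_of_nonneg hy.le, smul_eq_mul, hd,
    Nat.add_sub_assoc (by norm_num)]
  calc y ^ (d + (2 - 1)) * (y⁻¹ * (1 + y) ^ (-r)) = y ^ d * (1 + y) ^ (-r) := by
        rw [pow_succ, mul_assoc, mul_inv_cancel_left₀ hy.ne']
    _ ≤ (1 + y) ^ d * (1 + y) ^ (-r) := by gcongr; linarith
    _ = (1 + y) ^ (-(r - d)) := by
        rw [← Real.rpow_natCast, ← Real.rpow_add hy1]
        ring_nf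

theorem integrable_inv_norm_mul_schwartzMap {E F : Type*} [NormedAddCommGroup E] [NormedSpace ℝ E]
    [FiniteDimensional ℝ E] [MeasurableSpace E] [BorelSpace E] (μ : Measure E)
    [μ.IsAddHaarMeasure] [NormedAddCommGroup F] [NormedSpace ℝ F] (hE : 1 < Module.finrank ℝ E)
    (f : 𝓢(E, F)) : Integrable (fun x => ‖x‖⁻¹ * ‖f x‖) μ := by
  set d := Module.finrank ℝ E
  obtain ⟨C, hC⟩ : ∃ C, ∀ x, (1 + ‖x‖) ^ d * ‖f x‖ ≤ C :=
    ⟨_, fun x => by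
      simpa only [norm_iteratedFDeriv_zero] using
        SchwartzMap.one_add_le_sup_seminorm_apply (𝕜 := ℝ) (m := (d, 0)) le_rfl le_rfl f x⟩
  refine ((integrable_inv_norm_mul_one_add_norm_rpow μ hE (r := d) (by simp [d])).const_mul
    C).mono' ?_ (.of_forall fun x => ?_)
  · have := f.continuous
    fun_prop
  · rw [Real.norm_of_nonneg (by positivity), Real.rpow_neg (by positivity), Real.rpow_natCast]
    calc ‖x‖⁻¹ * ‖f x‖ = ((1 + ‖x‖) ^ d * ‖f x‖) * (‖x‖⁻¹ * ((1 + ‖x‖) ^ d)⁻¹) := by field_simp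
      _ ≤ C * (‖x‖⁻¹ * ((1 + ‖x‖) ^ d)⁻¹) := by gcongr; exact hC x

/-- Functions on the plane that are integrable against all powers of the norm: the amplitudes whose
Fourier integrals are smooth. -/
structure HasFiniteMoments (g : ℝ × ℝ → ℂ) : Prop where
  aestronglyMeasurable : AEStronglyMeasurable g
  integrable_pow_mul (n : ℕ) : Integrable fun η => ‖η‖ ^ n * ‖g η‖

namespace HasFiniteMoments

variable {g h : ℝ × ℝ → ℂ}

theorem integrable (hg : HasFiniteMoments g) : Integrable g :=
  (integrable_norm_iff hg.aestronglyMeasurable).1 (by simpa using hg.integrable_pow_mul 0)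

theorem add (hg : HasFiniteMoments g) (hh : HasFiniteMoments h) :
    HasFiniteMoments fun η => g η + h η where
  aestronglyMeasurable := hg.aestronglyMeasurable.add hh.aestronglyMeasurable
  integrable_pow_mul n := by
    have := hg.aestronglyMeasurable
    have := hh.aestronglyMeasurable
    refine ((hg.integrable_pow_mul n).add (hh.integrable_pow_mul n)).mono' (by fun_prop)
      (.of_forall fun η => ?_)
    rw [Real.norm_of_nonneg (by positivity), Pi.add_apply, ← mul_add]
    gcongr
    exact norm_add_le _ _

theorem const_mul (hg : HasFiniteMoments g) (c : ℂ) : HasFiniteMoments fun η => c * g η where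
  aestronglyMeasurable := hg.aestronglyMeasurable.const_mul c
  integrable_pow_mul n := by
    simpa only [norm_mul, mul_left_comm] using (hg.integrable_pow_mul n).const_mul ‖c‖

theorem fst_mul (hg : HasFiniteMoments g) : HasFiniteMoments fun η => η.1 * g η where
  aestronglyMeasurable := AEStronglyMeasurable.mul (by fun_prop) hg.aestronglyMeasurable
  integrable_pow_mul n := by
    have hmeas := hg.aestronglyMeasurable
    refine (hg.integrable_pow_mul (n + 1)).mono' (by fun_prop) (.of_forall fun η => ?_)
    rw [Real.norm_of_nonneg (by positivity), norm_mul, Complex.norm_real, pow_succ, mul_assoc]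
    gcongr
    exact norm_fst_le η

theorem schwartzMap (ψ : 𝓢(ℝ × ℝ, ℂ)) : HasFiniteMoments ψ where
  aestronglyMeasurable := ψ.continuous.aestronglyMeasurable
  integrable_pow_mul n := ψ.integrable_pow_mul volume n

theorem mul_schwartzMap {K : ℝ × ℝ → ℂ} (hK : Measurable K) (hle : ∀ η, ‖K η‖ ≤ ‖η‖⁻¹)
    (ψ : 𝓢(ℝ × ℝ, ℂ)) : HasFiniteMoments fun η => K η * ψ η where
  aestronglyMeasurable := hK.aestronglyMeasurable.mul ψ.continuous.aestronglyMeasurable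
  integrable_pow_mul n := by
    have hdom : Integrable fun η => ‖η‖⁻¹ * (‖η‖ ^ n * ‖ψ η‖) := by
      rcases n with _ | n
      · simpa using integrable_inv_norm_mul_schwartzMap volume (by simp) ψ
      · refine (ψ.integrable_pow_mul volume n).mono' ?_ (.of_forall fun η => ?_)
        · have := ψ.continuous
          fun_prop
        · rcases eq_or_ne η 0 with rfl | hη
          · rw [norm_zero, inv_zero, zero_mul, norm_zero]
            positivity
          · rw [Real.norm_of_nonneg (by positivity), pow_succ', mul_assoc,
              inv_mul_cancel_left₀ (norm_ne_zero_iff.2 hη)]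
    refine hdom.mono' ?_ (.of_forall fun η => ?_)
    · have := ψ.continuous
      fun_prop
    · rw [Real.norm_of_nonneg (by positivity), norm_mul, mul_left_comm]
      gcongr
      exact hle η

end HasFiniteMoments

end FiniteMoments

section OscillatoryIntegral

/-- The Fourier integral `x ↦ ∫ e^{i x η₁} g(η) dη` in the first variable, through which `f₁` and
`f₂` are defined. -/
def oscIntegral (g : ℝ × ℝ → ℂ) (x : ℝ) : ℂ :=
  ∫ η : ℝ × ℝ, Complex.exp (Complex.I * x * η.1) * g η

variable {g h : ℝ × ℝ → ℂ}

theorem HasFiniteMoments.integrable_exp_mul (hg : HasFiniteMoments g) (x : ℝ) :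
    Integrable fun η : ℝ × ℝ => Complex.exp (Complex.I * x * η.1) * g η := by
  refine hg.integrable.bdd_mul (c := 1) (by fun_prop) (.of_forall fun η => ?_)
  rw [mul_assoc, ← Complex.ofReal_mul, mul_comm, Complex.norm_exp_ofReal_mul_I]

theorem oscIntegral_add (hg : HasFiniteMoments g) (hh : HasFiniteMoments h) (x : ℝ) :
    oscIntegral (fun η => g η + h η) x = oscIntegral g x + oscIntegral h x := by
  simp only [oscIntegral, mul_add]
  exact integral_add (hg.integrable_exp_mul x) (hh.integrable_exp_mul x)

theorem oscIntegral_const_mul (c : ℂ) (g : ℝ × ℝ → ℂ) (x : ℝ) :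
    oscIntegral (fun η => c * g η) x = c * oscIntegral g x := by
  simp only [oscIntegral, mul_left_comm _ c]
  exact integral_const_mul c _

theorem oscIntegral_neg_of_odd (hg : ∀ η, g (-η) = -g η) (x : ℝ) :
    oscIntegral g (-x) = -oscIntegral g x := by
  rw [oscIntegral, ← integral_neg_eq_self, oscIntegral, ← integral_neg]
  simp only [hg, Prod.fst_neg, Complex.ofReal_neg, mul_neg, neg_mul, neg_neg]

/-- The pairing `(η, x) ↦ -x η₁ / 2π`, normalized so that `oscIntegral` is the Fourier integral of
Mathlib for it. -/
def oscPairing : ℝ × ℝ →L[ℝ] ℝ →L[ℝ] ℝ :=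
  -(2 * π)⁻¹ • (ContinuousLinearMap.mul ℝ ℝ).comp (ContinuousLinearMap.fst ℝ ℝ ℝ)

theorem oscIntegral_eq_fourierIntegral (g : ℝ × ℝ → ℂ) :
    oscIntegral g =
      VectorFourier.fourierIntegral Real.fourierChar volume oscPairing.toLinearMap₁₂ g := by
  ext x
  refine integral_congr_ae (.of_forall fun η => ?_)
  simp only [Circle.smul_def, Real.fourierChar_apply, smul_eq_mul]
  congr 2
  simp only [oscPairing, ContinuousLinearMap.toLinearMap₁₂_apply_apply_apply, map_smul,
    LinearMap.smul_apply, neg_smul, LinearMap.neg_apply, ContinuousLinearMap.comp_apply,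
    ContinuousLinearMap.coe_fst', ContinuousLinearMap.mul_apply', smul_eq_mul, mul_inv_rev,
    neg_neg, Complex.ofReal_mul, Complex.ofReal_ofNat, Complex.ofReal_inv]
  field_simp

theorem HasFiniteMoments.contDiff_oscIntegral (hg : HasFiniteMoments g) :
    ContDiff ℝ (⊤ : ℕ∞) (oscIntegral g) := by
  rw [oscIntegral_eq_fourierIntegral]
  exact VectorFourier.contDiff_fourierIntegral oscPairing fun n _ => hg.integrable_pow_mul n

theorem HasFiniteMoments.hasDerivAt_oscIntegral (hg : HasFiniteMoments g) (x : ℝ) :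
    HasDerivAt (oscIntegral g) (oscIntegral (fun η => Complex.I * (η.1 * g η)) x) x := by
  have hmom : Integrable fun η => ‖η‖ * ‖g η‖ := by simpa using hg.integrable_pow_mul 1
  have hsmul : Integrable (VectorFourier.fourierSMulRight oscPairing g) := by
    refine (hmom.const_mul (2 * π * ‖oscPairing‖)).mono'
      hg.aestronglyMeasurable.fourierSMulRight (.of_forall fun η => ?_)
    rw [← mul_assoc]
    exact VectorFourier.norm_fourierSMulRight_le oscPairing g η
  have hderiv := (VectorFourier.hasFDerivAt_fourierIntegral oscPairing hg.integrable hmom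
    x).hasDerivAt
  rw [VectorFourier.fourierIntegral_continuousLinearMap_apply Real.continuous_fourierChar hsmul,
    ← oscIntegral_eq_fourierIntegral, ← oscIntegral_eq_fourierIntegral] at hderiv
  refine hderiv.congr_deriv ?_
  congr 2 with η
  rw [VectorFourier.fourierSMulRight_apply]
  simp only [oscPairing, smul_apply, neg_smul, neg_apply, ContinuousLinearMap.comp_apply,
    ContinuousLinearMap.coe_fst', ContinuousLinearMap.mul_apply', mul_one, smul_eq_mul,
    Complex.real_smul, mul_inv_rev, Complex.ofReal_mul, Complex.ofReal_inv, Complex.ofReal_ofNat,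
    mul_neg, neg_mul, neg_neg]
  field_simp

theorem hasDerivAt_pow_mul_oscIntegral {n : ℕ} {x : ℝ} (hg : HasFiniteMoments g)
    (hh : HasFiniteMoments h)
    (heuler : oscIntegral (fun η => (n + 1 : ℂ) * g η +
      (x * (Complex.I * (η.1 * g η)) + -1 * h η)) x = 0) :
    HasDerivAt (fun x : ℝ => x ^ (n + 1) * oscIntegral g x) (x ^ n * oscIntegral h x) x := by
  have hIg := hg.fst_mul.const_mul Complex.I
  rw [oscIntegral_add (hg.const_mul _) ((hIg.const_mul _).add (hh.const_mul _)),
    oscIntegral_add (hIg.const_mul _) (hh.const_mul _), oscIntegral_const_mul,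
    oscIntegral_const_mul (x : ℂ), oscIntegral_const_mul (-1)] at heuler
  have hpow : HasDerivAt (fun x : ℝ => (x : ℂ) ^ (n + 1)) ((n + 1) * x ^ n) x := by
    simpa using (hasDerivAt_id x).ofReal_comp.fun_pow (n + 1)
  refine (hpow.mul (hg.hasDerivAt_oscIntegral x)).congr_deriv ?_
  linear_combination (x : ℂ) ^ n * heuler

theorem integral_polar_eq_zero_of_hasDerivAt {E : Type*} [NormedAddCommGroup E] [NormedSpace ℝ E]
    [CompleteSpace E] {f : ℝ × ℝ → E} {B B' : ℝ → ℝ → E}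
    (hB : ∀ r > 0, ∀ θ, HasDerivAt (B r) (B' r θ) θ) (hB' : ∀ r > 0, Continuous (B' r))
    (hper : ∀ r > 0, B r π = B r (-π))
    (hf : ∀ r > 0, ∀ θ, r • f (r * cos θ, r * sin θ) = B' r θ) : ∫ η, f η = 0 := by
  rw [← integral_comp_polarCoord_symm, polarCoord_target]
  by_cases hint : IntegrableOn (fun p : ℝ × ℝ => p.1 • f (polarCoord.symm p))
      (Set.Ioi 0 ×ˢ Set.Ioo (-π) π)
  · rw [Measure.volume_eq_prod, setIntegral_prod _ hint]
    refine setIntegral_eq_zero_of_forall_eq_zero fun r (hr : 0 < r) => ?_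
    simp only [polarCoord_symm_apply, hf r hr]
    rw [← integral_Ioc_eq_integral_Ioo, ← intervalIntegral.integral_of_le (by linarith [pi_pos]),
      intervalIntegral.integral_eq_sub_of_hasDerivAt (fun θ _ => hB r hr θ)
        ((hB' r hr).intervalIntegrable _ _), hper r hr, sub_self]
  · exact integral_undef hint

theorem hasDerivAt_exp_mul_cos (x r θ : ℝ) :
    HasDerivAt (fun θ : ℝ => Complex.exp (Complex.I * x * (r * cos θ : ℝ)))
      (Complex.exp (Complex.I * x * (r * cos θ : ℝ)) * (Complex.I * x * (r * -sin θ : ℝ))) θ :=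
  (((hasDerivAt_cos θ).const_mul r).ofReal_comp.const_mul (Complex.I * x)).cexp

/-- The condition `hg` says that `r e^{i x r cos θ} g` is the `θ`-derivative of
`b(θ) e^{i x r cos θ} ρ(r)`. -/
theorem oscIntegral_eq_zero_of_angular_deriv {x : ℝ} {b b' : ℝ → ℂ} {ρ : ℝ → ℂ}
    (hb : ∀ θ, HasDerivAt b (b' θ) θ) (hb' : Continuous b') (hper : b π = b (-π))
    (hg : ∀ r > 0, ∀ θ, r * g (r * cos θ, r * sin θ) =
      (b' θ - Complex.I * x * (r * sin θ) * b θ) * ρ r) :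
    oscIntegral g x = 0 := by
  have hbc : Continuous b := continuous_iff_continuousAt.2 fun θ => (hb θ).continuousAt
  refine integral_polar_eq_zero_of_hasDerivAt
    (B := fun r θ => b θ * Complex.exp (Complex.I * x * (r * cos θ : ℝ)) * ρ r)
    (fun r _ θ => ((hb θ).mul (hasDerivAt_exp_mul_cos x r θ)).mul_const (ρ r))
    (fun r _ => by fun_prop) (fun r _ => ?_) fun r hr θ => ?_
  · rw [hper, cos_neg]
  · rw [Complex.real_smul, mul_left_comm, hg r hr θ]
    push_cast
    ring

end OscillatoryIntegral

section Symbols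

open scoped SchwartzMap

/-- The Fourier symbol `-i η₁ / |η|²` of `∂₁ Δ⁻¹`, with value `0` at the origin. -/
def invLaplacianSymbol (η : ℝ × ℝ) : ℂ := -Complex.I * η.1 / (η.1 ^ 2 + η.2 ^ 2)

/-- The Fourier symbol `-i η₁ η₂² / |η|⁴` of `∂₁ ∂₂² Δ⁻²`, with value `0` at the origin. -/
def invBilaplacianSymbol (η : ℝ × ℝ) : ℂ :=
  -Complex.I * η.1 * η.2 ^ 2 / (η.1 ^ 2 + η.2 ^ 2) ^ 2

theorem measurable_invLaplacianSymbol : Measurable invLaplacianSymbol := by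
  unfold invLaplacianSymbol
  fun_prop

theorem measurable_invBilaplacianSymbol : Measurable invBilaplacianSymbol := by
  unfold invBilaplacianSymbol
  fun_prop

theorem invLaplacianSymbol_neg (η : ℝ × ℝ) : invLaplacianSymbol (-η) = -invLaplacianSymbol η := by
  simp [invLaplacianSymbol, neg_div]

theorem invBilaplacianSymbol_neg (η : ℝ × ℝ) :
    invBilaplacianSymbol (-η) = -invBilaplacianSymbol η := by
  simp only [invBilaplacianSymbol, Prod.fst_neg, Prod.snd_neg, Complex.ofReal_neg,
    even_two.neg_pow]
  ring

theorem norm_sq_le_sq_add_sq (η : ℝ × ℝ) : ‖η‖ ^ 2 ≤ η.1 ^ 2 + η.2 ^ 2 := by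
  rcases max_choice ‖η.1‖ ‖η.2‖ with h | h <;>
    rw [Prod.norm_def, h, Real.norm_eq_abs, sq_abs] <;>
    nlinarith [sq_nonneg η.1, sq_nonneg η.2]

theorem norm_invLaplacianSymbol_le (η : ℝ × ℝ) : ‖invLaplacianSymbol η‖ ≤ ‖η‖⁻¹ := by
  have hnorm : ‖invLaplacianSymbol η‖ = ‖η.1‖ / (η.1 ^ 2 + η.2 ^ 2) := by
    have hden : (η.1 ^ 2 + η.2 ^ 2 : ℂ) = (η.1 ^ 2 + η.2 ^ 2 : ℝ) := by push_cast; rfl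
    rw [invLaplacianSymbol, hden, norm_div, norm_mul, norm_neg, Complex.norm_I, one_mul,
      Complex.norm_real, Complex.norm_real,
      Real.norm_of_nonneg (by positivity : 0 ≤ η.1 ^ 2 + η.2 ^ 2)]
  rcases eq_or_ne η 0 with rfl | hη
  · simp [invLaplacianSymbol]
  · have hpos : 0 < ‖η‖ := norm_pos_iff.2 hη
    calc ‖invLaplacianSymbol η‖ ≤ ‖η‖ / ‖η‖ ^ 2 := by
          rw [hnorm]
          exact div_le_div₀ hpos.le (norm_fst_le η) (by positivity) (norm_sq_le_sq_add_sq η)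
      _ = ‖η‖⁻¹ := by field_simp

theorem norm_invBilaplacianSymbol_le (η : ℝ × ℝ) : ‖invBilaplacianSymbol η‖ ≤ ‖η‖⁻¹ := by
  have hfactor : invBilaplacianSymbol η =
      (η.2 ^ 2 / (η.1 ^ 2 + η.2 ^ 2) : ℝ) * invLaplacianSymbol η := by
    simp only [invBilaplacianSymbol, invLaplacianSymbol]
    push_cast
    rw [div_mul_div_comm]
    ring
  rw [hfactor, norm_mul, Complex.norm_real, Real.norm_of_nonneg (by positivity)]
  refine (mul_le_of_le_one_left (norm_nonneg _) (div_le_one_of_le₀ ?_ ?_)).trans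
    (norm_invLaplacianSymbol_le η)
  · linarith [sq_nonneg η.1]
  · positivity

theorem polar_sq_add_sq (r θ : ℝ) :
    ((r * cos θ : ℝ) : ℂ) ^ 2 + ((r * sin θ : ℝ) : ℂ) ^ 2 = r ^ 2 := by
  norm_cast
  linear_combination r ^ 2 * sin_sq_add_cos_sq θ

theorem invLaplacianSymbol_polar {r : ℝ} (hr : r ≠ 0) (θ : ℝ) :
    r * invLaplacianSymbol (r * cos θ, r * sin θ) = -Complex.I * cos θ := by
  rw [invLaplacianSymbol, polar_sq_add_sq]
  push_cast
  field_simp [Complex.ofReal_ne_zero.2 hr]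

theorem invBilaplacianSymbol_polar {r : ℝ} (hr : r ≠ 0) (θ : ℝ) :
    r * invBilaplacianSymbol (r * cos θ, r * sin θ) = -Complex.I * cos θ * sin θ ^ 2 := by
  rw [invBilaplacianSymbol, polar_sq_add_sq]
  push_cast
  field_simp [Complex.ofReal_ne_zero.2 hr]

variable {ψ : 𝓢(ℝ × ℝ, ℂ)}

theorem hasFiniteMoments_invLaplacianSymbol_mul (ψ : 𝓢(ℝ × ℝ, ℂ)) :
    HasFiniteMoments fun η => invLaplacianSymbol η * ψ η :=
  .mul_schwartzMap measurable_invLaplacianSymbol norm_invLaplacianSymbol_le ψ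

theorem hasFiniteMoments_invBilaplacianSymbol_mul (ψ : 𝓢(ℝ × ℝ, ℂ)) :
    HasFiniteMoments fun η => invBilaplacianSymbol η * ψ η :=
  .mul_schwartzMap measurable_invBilaplacianSymbol norm_invBilaplacianSymbol_le ψ

theorem hasDerivAt_mul_oscIntegral_invLaplacianSymbol (hψ : IsRotationInvariant ψ) (x : ℝ) :
    HasDerivAt (fun x : ℝ => x * oscIntegral (fun η => invLaplacianSymbol η * ψ η) x)
      (x * oscIntegral ψ x) x := by
  have hderiv := hasDerivAt_pow_mul_oscIntegral (n := 0) (x := x)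
    (hasFiniteMoments_invLaplacianSymbol_mul ψ)
    ((HasFiniteMoments.schwartzMap ψ).const_mul x) <|
    oscIntegral_eq_zero_of_angular_deriv (ρ := fun r => ψ (r, 0))
      (fun θ => (hasDerivAt_sin θ).ofReal_comp.const_mul (-Complex.I)) (by fun_prop) (by simp)
      fun r hr θ => ?_
  · simpa only [zero_add, pow_one, pow_zero, one_mul, oscIntegral_const_mul] using hderiv
  · have hpolar := invLaplacianSymbol_polar hr.ne' θ
    have hcircle : (sin θ : ℂ) ^ 2 + (cos θ : ℂ) ^ 2 = 1 := mod_cast sin_sq_add_cos_sq θ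
    rw [hψ.apply_polar]
    push_cast at hpolar hcircle ⊢
    linear_combination (1 + Complex.I * x * (r * Complex.cos θ)) * ψ (r, 0) * hpolar
      + (x * r * ψ (r, 0)) * hcircle
      - x * r * ψ (r, 0) * (Complex.cos θ ^ 2 + Complex.sin θ ^ 2) * Complex.I_sq

theorem hasDerivAt_pow_mul_oscIntegral_invBilaplacianSymbol (hψ : IsRotationInvariant ψ) (x : ℝ) :
    HasDerivAt (fun x : ℝ => x ^ 3 * oscIntegral (fun η => invBilaplacianSymbol η * ψ η) x)
      (x ^ 2 * oscIntegral (fun η => invLaplacianSymbol η * ψ η) x) x := by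
  refine hasDerivAt_pow_mul_oscIntegral (n := 2)
    (hasFiniteMoments_invBilaplacianSymbol_mul ψ) (hasFiniteMoments_invLaplacianSymbol_mul ψ) <|
    oscIntegral_eq_zero_of_angular_deriv (ρ := fun r => ψ (r, 0))
      (fun θ => ((hasDerivAt_sin θ).ofReal_comp.fun_mul
        ((hasDerivAt_cos θ).ofReal_comp.fun_pow 2)).const_mul Complex.I)
      (by fun_prop) (by simp) fun r hr θ => ?_
  have hpolar := invLaplacianSymbol_polar hr.ne' θ
  have hpolar' := invBilaplacianSymbol_polar hr.ne' θ
  have hcircle : (sin θ : ℂ) ^ 2 + (cos θ : ℂ) ^ 2 = 1 := mod_cast sin_sq_add_cos_sq θ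
  rw [hψ.apply_polar]
  push_cast at hpolar hpolar' hcircle ⊢
  linear_combination (3 + Complex.I * x * (r * Complex.cos θ)) * ψ (r, 0) * hpolar'
    - ψ (r, 0) * hpolar - Complex.I * Complex.cos θ * ψ (r, 0) * hcircle

end Symbols

section Decay

variable {F : Type*} [NormedAddCommGroup F]

theorem exists_forall_norm_le_of_eventually_cocompact {X : Type*} [TopologicalSpace X] {u : X → F}
    (hu : Continuous u) {B : ℝ} (hB : ∀ᶠ x in cocompact X, ‖u x‖ ≤ B) :
    ∃ C, ∀ x, ‖u x‖ ≤ C := by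
  obtain ⟨K, hK, hKB⟩ := (hasBasis_cocompact.eventually_iff).1 hB
  obtain ⟨M, hM⟩ := hK.exists_bound_of_continuousOn hu.continuousOn
  refine ⟨max M B, fun x => ?_⟩
  by_cases hx : x ∈ K
  · exact le_max_of_le_left (hM x hx)
  · exact le_max_of_le_right (hKB hx)

theorem eventuallyEq_cocompact_of_even {α : Type*} {f g : ℝ → α} (hf : f.Even) (hg : g.Even)
    (h : f =ᶠ[atTop] g) : f =ᶠ[cocompact ℝ] g := by
  rw [cocompact_eq_atBot_atTop, EventuallyEq, eventually_sup]
  refine ⟨?_, h⟩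
  filter_upwards [tendsto_neg_atBot_atTop.eventually h] with x hx
  rwa [hf, hg] at hx

variable [NormedSpace ℝ F]

theorem exists_eventuallyEq_const_of_hasDerivAt_zero {u : ℝ → F}
    (hu : ∀ᶠ x in atTop, HasDerivAt u 0 x) : ∃ c, ∀ᶠ x in atTop, u x = c := by
  obtain ⟨R, hR⟩ := eventually_atTop.1 hu
  have hzero (x : ℝ) (hx : x ∈ Set.Ioi R) : HasDerivAt u 0 x := hR x (le_of_lt hx)
  obtain ⟨c, hc⟩ := isOpen_Ioi.exists_is_const_of_deriv_eq_zero isPreconnected_Ioi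
    (fun x hx => (hzero x hx).differentiableAt.differentiableWithinAt)
    (fun x hx => (hzero x hx).deriv)
  exact ⟨c, (eventually_gt_atTop R).mono hc⟩

theorem iteratedDeriv_eventuallyEq_cocompact {f g : ℝ → F} (h : f =ᶠ[cocompact ℝ] g) (k : ℕ) :
    iteratedDeriv k f =ᶠ[cocompact ℝ] iteratedDeriv k g := by
  obtain ⟨K, hK, hfg⟩ := (hasBasis_cocompact.eventually_iff).1 h
  filter_upwards [hK.compl_mem_cocompact] with x hx
  exact (Filter.eventuallyEq_of_mem (hK.isClosed.isOpen_compl.mem_nhds hx)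
    fun y hy => hfg hy).iteratedDeriv_eq k

theorem iteratedDeriv_zpow_smul_const (m : ℤ) (c : F) (k : ℕ) {x : ℝ} (hx : x ≠ 0) :
    iteratedDeriv k (fun y : ℝ => y ^ m • c) x =
      ((∏ i ∈ Finset.range k, ((m : ℝ) - i)) * x ^ (m - k)) • c := by
  have hzpow : ContDiffAt ℝ k (fun y : ℝ => y ^ m) x :=
    (analyticAt_id.fun_zpow hx).contDiffAt
  rw [iteratedDeriv_smul_const hzpow, iteratedDeriv_eq_iterate]
  congr 1
  exact iter_deriv_zpow m x k

theorem exists_norm_iteratedDeriv_le_of_eventuallyEq_zpow {g : ℝ → F} {k m : ℕ}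
    (hg : ContDiff ℝ k g) {c : F} (htail : g =ᶠ[cocompact ℝ] fun x => x ^ (-m : ℤ) • c) :
    ∃ C, ∀ x, ‖iteratedDeriv k g x‖ ≤ C / (1 + |x| ^ (k + m)) := by
  set P : ℝ := ∏ i ∈ Finset.range k, (((-m : ℤ) : ℝ) - i)
  have hcont : Continuous fun x : ℝ => (1 + |x| ^ (k + m)) • iteratedDeriv k g x := by
    have := hg.continuous_iteratedDeriv k le_rfl
    fun_prop
  have hbound : ∀ᶠ x in cocompact ℝ, ‖(1 + |x| ^ (k + m)) • iteratedDeriv k g x‖ ≤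
      2 * (|P| * ‖c‖) := by
    filter_upwards [iteratedDeriv_eventuallyEq_cocompact htail k,
      (tendsto_norm_cocompact_atTop (E := ℝ)).eventually_ge_atTop 1] with x hx hx1
    rw [Real.norm_eq_abs] at hx1
    have hx0 : x ≠ 0 := abs_pos.1 (zero_lt_one.trans_le hx1)
    have hpow : 1 ≤ |x| ^ (k + m) := one_le_pow₀ hx1
    rw [hx, iteratedDeriv_zpow_smul_const _ _ _ hx0, norm_smul, norm_smul,
      Real.norm_of_nonneg (by positivity), norm_mul, norm_zpow, Real.norm_eq_abs, Real.norm_eq_abs,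
      show (-m - k : ℤ) = -(k + m : ℕ) by push_cast; ring, zpow_neg, zpow_natCast]
    calc (1 + |x| ^ (k + m)) * (|P| * (|x| ^ (k + m))⁻¹ * ‖c‖)
        ≤ (2 * |x| ^ (k + m)) * (|P| * (|x| ^ (k + m))⁻¹ * ‖c‖) := by gcongr; linarith
      _ = 2 * (|P| * ‖c‖) := by field_simp
  obtain ⟨C, hC⟩ := exists_forall_norm_le_of_eventually_cocompact hcont hbound
  refine ⟨C, fun x => ?_⟩
  have hpos : 0 < 1 + |x| ^ (k + m) := by positivity
  rw [le_div_iff₀' hpos]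
  simpa only [norm_smul, Real.norm_of_nonneg hpos.le] using hC x

end Decay

section RadialAsymptotics

open scoped SchwartzMap

/-- Gauss' law: the radial field `∂₁ Δ⁻¹ φ` sees only the total mass of `φ` outside the support. -/
theorem mul_oscIntegral_invLaplacianSymbol_mul_ft2 {φ : ℝ × ℝ → ℝ} (hφ : ContDiff ℝ (⊤ : ℕ∞) φ)
    (hc : HasCompactSupport φ) (hrot : IsRotationInvariant φ) {x : ℝ} (hx : 0 ≤ x)
    (hzero : ∀ s, x < s → φ (s, 0) = 0) :
    x * oscIntegral (fun η => invLaplacianSymbol η * ft2 φ η) x = (2 * π * ∫ p, φ p : ℝ) := by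
  obtain ⟨ψ, hψ⟩ := exists_schwartzMap_eq_ft2 hφ hc
  have hinversion (s : ℝ) : oscIntegral ψ s = ((2 * π) ^ 2 * φ (s, 0) : ℝ) := by
    rw [hψ, ← integral_exp_mul_ft2 hφ hc, oscIntegral]
    simp only [Complex.ofReal_zero, zero_mul, add_zero, mul_assoc]
  have hderiv (s : ℝ) : HasDerivAt
      (fun s : ℝ => s * oscIntegral (fun η => invLaplacianSymbol η * ψ η) s)
      ((2 * π) ^ 2 * (s * φ (s, 0)) : ℝ) s := by
    refine (hasDerivAt_mul_oscIntegral_invLaplacianSymbol (hψ ▸ hrot.ft2) s).congr_deriv ?_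
    rw [hinversion, ← Complex.ofReal_mul, mul_left_comm]
  have hcont : Continuous fun s : ℝ => s * φ (s, 0) :=
    continuous_id.mul (hφ.continuous.comp (by fun_prop))
  have hftc := intervalIntegral.integral_eq_sub_of_hasDerivAt (a := 0) (b := x)
    (fun s _ => hderiv s)
    ((Complex.continuous_ofReal.comp (hcont.const_mul ((2 * π) ^ 2))).intervalIntegrable _ _)
  have hmass : ∫ s in Set.Ioi (0 : ℝ), s * φ (s, 0) = ∫ s in Set.Ioc 0 x, s * φ (s, 0) :=
    setIntegral_eq_of_subset_of_forall_sdiff_eq_zero measurableSet_Ioi Set.Ioc_subset_Ioi_self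
      fun s hs => by
        rw [hzero s (not_le.1 fun hle => hs.2 ⟨hs.1, hle⟩), mul_zero]
  rw [Complex.ofReal_zero, zero_mul, sub_zero, hψ, intervalIntegral.integral_ofReal,
    intervalIntegral.integral_const_mul, intervalIntegral.integral_of_le hx, ← hmass] at hftc
  rw [← hftc, hrot.integral_eq]
  simp only [smul_eq_mul]
  ring_nf

theorem eventually_atTop_eq_zero_of_hasCompactSupport {φ : ℝ × ℝ → ℝ} (hc : HasCompactSupport φ) :
    ∀ᶠ x : ℝ in atTop, φ (x, 0) = 0 := by
  obtain ⟨R, -, hR⟩ := hc.exists_pos_le_norm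
  filter_upwards [eventually_ge_atTop R] with x hx
  exact hR _ ((hx.trans (le_abs_self x)).trans (norm_fst_le (x, (0 : ℝ))))

end RadialAsymptotics

section AuxiliaryFunctions

variable {ϕ : ℝ × ℝ → ℝ}

theorem f1_eq_mul_oscIntegral (ϕ : ℝ × ℝ → ℝ) (x : ℝ) :
    f1 ϕ x = (x / π : ℝ) * oscIntegral (fun η => invBilaplacianSymbol η * ft2 (conv2 ϕ) η) x := by
  simp only [f1, oscIntegral, invBilaplacianSymbol, mul_assoc]

theorem f2_eq_mul_oscIntegral_sub (hϕ : ContDiff ℝ (⊤ : ℕ∞) ϕ) (hc : HasCompactSupport ϕ)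
    (x : ℝ) :
    f2 ϕ x = (x / π : ℝ) * oscIntegral (fun η => invLaplacianSymbol η * ft2 (conv2 ϕ) η) x
      - 2 * f1 ϕ x := by
  obtain ⟨ψ, hψ⟩ := exists_schwartzMap_eq_ft2 (contDiff_conv2 hϕ hc) (hasCompactSupport_conv2 hc)
  have hkernel (η : ℝ × ℝ) : -Complex.I * η.1 * (η.1 ^ 2 - η.2 ^ 2) / (η.1 ^ 2 + η.2 ^ 2) ^ 2 =
      invLaplacianSymbol η + -2 * invBilaplacianSymbol η := by
    rw [invLaplacianSymbol, invBilaplacianSymbol]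
    rcases eq_or_ne (η.1 ^ 2 + η.2 ^ 2 : ℂ) 0 with h | h
    · simp [h]
    · field_simp
      ring
  have hsplit : f2 ϕ x = (x / π : ℝ) * oscIntegral (fun η =>
      invLaplacianSymbol η * ψ η + -2 * (invBilaplacianSymbol η * ψ η)) x := by
    simp only [f2, oscIntegral, hkernel, hψ]
    congr! 3
    ring
  rw [hsplit, f1_eq_mul_oscIntegral, ← hψ, oscIntegral_add
    (hasFiniteMoments_invLaplacianSymbol_mul ψ)
    ((hasFiniteMoments_invBilaplacianSymbol_mul ψ).const_mul _), oscIntegral_const_mul]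
  ring

theorem contDiff_ofReal_div_const (a : ℝ) : ContDiff ℝ (⊤ : ℕ∞) fun x : ℝ => ((x / a : ℝ) : ℂ) :=
  Complex.ofRealCLM.contDiff.comp (contDiff_id.div_const a)

theorem contDiff_f1 (hϕ : ContDiff ℝ (⊤ : ℕ∞) ϕ) (hc : HasCompactSupport ϕ) :
    ContDiff ℝ (⊤ : ℕ∞) (f1 ϕ) := by
  obtain ⟨ψ, hψ⟩ := exists_schwartzMap_eq_ft2 (contDiff_conv2 hϕ hc) (hasCompactSupport_conv2 hc)
  rw [funext (f1_eq_mul_oscIntegral ϕ), ← hψ]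
  exact (contDiff_ofReal_div_const π).mul
    (hasFiniteMoments_invBilaplacianSymbol_mul ψ).contDiff_oscIntegral

theorem contDiff_f2 (hϕ : ContDiff ℝ (⊤ : ℕ∞) ϕ) (hc : HasCompactSupport ϕ) :
    ContDiff ℝ (⊤ : ℕ∞) (f2 ϕ) := by
  obtain ⟨ψ, hψ⟩ := exists_schwartzMap_eq_ft2 (contDiff_conv2 hϕ hc) (hasCompactSupport_conv2 hc)
  rw [funext (f2_eq_mul_oscIntegral_sub hϕ hc), ← hψ]
  exact ((contDiff_ofReal_div_const π).mul
    (hasFiniteMoments_invLaplacianSymbol_mul ψ).contDiff_oscIntegral).sub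
    (contDiff_const.mul (contDiff_f1 hϕ hc))

theorem even_f1 (hrot : IsRotationInvariant ϕ) : (f1 ϕ).Even := fun x => by
  rw [f1_eq_mul_oscIntegral, f1_eq_mul_oscIntegral, oscIntegral_neg_of_odd fun η => by
    rw [invBilaplacianSymbol_neg, hrot.conv2.ft2.apply_neg, neg_mul]]
  push_cast
  ring

theorem even_f2 (hϕ : ContDiff ℝ (⊤ : ℕ∞) ϕ) (hc : HasCompactSupport ϕ)
    (hrot : IsRotationInvariant ϕ) : (f2 ϕ).Even := fun x => by
  rw [f2_eq_mul_oscIntegral_sub hϕ hc, f2_eq_mul_oscIntegral_sub hϕ hc, even_f1 hrot x,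
    oscIntegral_neg_of_odd fun η => by
      rw [invLaplacianSymbol_neg, hrot.conv2.ft2.apply_neg, neg_mul]]
  push_cast
  ring

theorem hasDerivAt_sq_mul_f1 (hϕ : ContDiff ℝ (⊤ : ℕ∞) ϕ) (hc : HasCompactSupport ϕ)
    (hrot : IsRotationInvariant ϕ) (x : ℝ) :
    HasDerivAt (fun x : ℝ => x ^ 2 * f1 ϕ x)
      (x ^ 2 * oscIntegral (fun η => invLaplacianSymbol η * ft2 (conv2 ϕ) η) x / π) x := by
  obtain ⟨ψ, hψ⟩ := exists_schwartzMap_eq_ft2 (contDiff_conv2 hϕ hc) (hasCompactSupport_conv2 hc)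
  have hcube : (fun x : ℝ => x ^ 2 * f1 ϕ x) = fun x : ℝ =>
      x ^ 3 * oscIntegral (fun η => invBilaplacianSymbol η * ψ η) x / π := by
    ext y
    rw [f1_eq_mul_oscIntegral, hψ]
    push_cast
    ring
  rw [hcube, ← hψ]
  exact (hasDerivAt_pow_mul_oscIntegral_invBilaplacianSymbol (hψ ▸ hrot.conv2.ft2) x).div_const _

theorem eventually_mul_oscIntegral_eq (hϕ : ContDiff ℝ (⊤ : ℕ∞) ϕ) (hc : HasCompactSupport ϕ)
    (hrot : IsRotationInvariant ϕ) (hmass : ∫ x, ϕ x = 1) :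
    ∀ᶠ x : ℝ in atTop,
      x * oscIntegral (fun η => invLaplacianSymbol η * ft2 (conv2 ϕ) η) x = 2 * π := by
  filter_upwards [eventually_ge_atTop 0,
    eventually_forall_ge_atTop.2
      (eventually_atTop_eq_zero_of_hasCompactSupport (hasCompactSupport_conv2 hc))]
    with x hx hzero
  rw [mul_oscIntegral_invLaplacianSymbol_mul_ft2 (contDiff_conv2 hϕ hc)
    (hasCompactSupport_conv2 hc) hrot.conv2 hx fun s hs => hzero s hs.le,
    integral_conv2 (hϕ.continuous.integrable_of_hasCompactSupport hc), hmass]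
  simp

theorem exists_eventuallyEq_f3 (hϕ : ContDiff ℝ (⊤ : ℕ∞) ϕ) (hc : HasCompactSupport ϕ)
    (hrot : IsRotationInvariant ϕ) (hmass : ∫ x, ϕ x = 1) :
    ∃ c : ℂ, f3 ϕ =ᶠ[atTop] fun x => x ^ (-2 : ℤ) • c := by
  obtain ⟨c, hc⟩ : ∃ c : ℂ, ∀ᶠ x : ℝ in atTop, x ^ 2 * f1 ϕ x - x ^ 2 = c := by
    refine exists_eventuallyEq_const_of_hasDerivAt_zero ?_
    filter_upwards [eventually_mul_oscIntegral_eq hϕ hc hrot hmass] with x hx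
    have hsq : HasDerivAt (fun x : ℝ => (x : ℂ) ^ 2) (2 * x) x := by
      simpa using (hasDerivAt_id x).ofReal_comp.fun_pow 2
    refine ((hasDerivAt_sq_mul_f1 hϕ hc hrot x).sub hsq).congr_deriv ?_
    rw [sq, mul_assoc, hx]
    field_simp [Complex.ofReal_ne_zero.2 pi_ne_zero]
    ring
  refine ⟨c, ?_⟩
  filter_upwards [hc, eventually_ne_atTop 0] with x hx hx0
  rw [← hx, f3, Complex.real_smul]
  push_cast
  field_simp [Complex.ofReal_ne_zero.2 hx0]

theorem eventually_f2_eq_neg_two_mul_f3 (hϕ : ContDiff ℝ (⊤ : ℕ∞) ϕ) (hc : HasCompactSupport ϕ)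
    (hrot : IsRotationInvariant ϕ) (hmass : ∫ x, ϕ x = 1) :
    ∀ᶠ x in atTop, f2 ϕ x = -2 * f3 ϕ x := by
  filter_upwards [eventually_mul_oscIntegral_eq hϕ hc hrot hmass] with x hx
  rw [f2_eq_mul_oscIntegral_sub hϕ hc, f3, Complex.ofReal_div, div_mul_eq_mul_div, hx,
    mul_div_cancel_right₀ _ (Complex.ofReal_ne_zero.2 pi_ne_zero)]
  ring

theorem exists_eventuallyEq_cocompact_f2_f3 (hϕ : ContDiff ℝ (⊤ : ℕ∞) ϕ)
    (hc : HasCompactSupport ϕ) (hrot : IsRotationInvariant ϕ) (hmass : ∫ x, ϕ x = 1) :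
    ∃ c : ℂ, (f2 ϕ =ᶠ[cocompact ℝ] fun x => x ^ (-2 : ℤ) • (-2 * c)) ∧
      f3 ϕ =ᶠ[cocompact ℝ] fun x => x ^ (-2 : ℤ) • c := by
  obtain ⟨c, h3⟩ := exists_eventuallyEq_f3 hϕ hc hrot hmass
  have h2 : f2 ϕ =ᶠ[atTop] fun x => x ^ (-2 : ℤ) • (-2 * c) := by
    filter_upwards [h3, eventually_f2_eq_neg_two_mul_f3 hϕ hc hrot hmass] with x hx3 hx2
    rw [hx2, hx3, mul_smul_comm]
  have htail (a : ℂ) : (fun x : ℝ => x ^ (-2 : ℤ) • a).Even := fun x =>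
    congrArg (· • a) ((by decide : Even (-2 : ℤ)).neg_zpow x)
  exact ⟨c, eventuallyEq_cocompact_of_even (even_f2 hϕ hc hrot) (htail _) h2,
    eventuallyEq_cocompact_of_even (fun x => by rw [f3, f3, even_f1 hrot x]) (htail _) h3⟩

end AuxiliaryFunctions

theorem statement7_general (ϕ : ℝ × ℝ → ℝ)
    (hsmooth : ContDiff ℝ (⊤ : ℕ∞) ϕ)
    (hsupp : HasCompactSupport ϕ)
    (hradial : ∀ x y : ℝ × ℝ, x.1 ^ 2 + x.2 ^ 2 = y.1 ^ 2 + y.2 ^ 2 → ϕ x = ϕ y)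
    (hnorm : (∫ x : ℝ × ℝ, ϕ x) = 1) (n : ℕ) :
    ContDiff ℝ (⊤ : ℕ∞) (f2 ϕ) ∧ ContDiff ℝ (⊤ : ℕ∞) (f3 ϕ) ∧
      ∃ C : ℝ, 0 < C ∧
        ∀ k : ℕ, k ≤ n → ∀ x : ℝ,
          ‖iteratedDeriv k (f2 ϕ) x‖ + ‖iteratedDeriv k (f3 ϕ) x‖
            ≤ C / (1 + |x| ^ (k + 2)) := by
  have hrot := isRotationInvariant_of_eq_of_sq_add_sq_eq hradial
  have hf2 := contDiff_f2 hsmooth hsupp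
  have hf3 : ContDiff ℝ (⊤ : ℕ∞) (f3 ϕ) := (contDiff_f1 hsmooth hsupp).sub contDiff_const
  obtain ⟨c, htail2, htail3⟩ := exists_eventuallyEq_cocompact_f2_f3 hsmooth hsupp hrot hnorm
  choose A hA using fun k : ℕ => exists_norm_iteratedDeriv_le_of_eventuallyEq_zpow
    (m := 2) (contDiff_infty.1 hf2 k) htail2
  choose B hB using fun k : ℕ => exists_norm_iteratedDeriv_le_of_eventuallyEq_zpow
    (m := 2) (contDiff_infty.1 hf3 k) htail3
  obtain ⟨M, hM⟩ := ((Finset.range (n + 1)).image fun k => A k + B k).bddAbove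
  refine ⟨hf2, hf3, max M 1, by positivity, fun k hk x => ?_⟩
  have hkM : A k + B k ≤ max M 1 := le_max_of_le_left <| hM <| Finset.mem_image_of_mem _ <|
    Finset.mem_range_succ_iff.2 hk
  calc ‖iteratedDeriv k (f2 ϕ) x‖ + ‖iteratedDeriv k (f3 ϕ) x‖
      ≤ A k / (1 + |x| ^ (k + 2)) + B k / (1 + |x| ^ (k + 2)) := add_le_add (hA k x) (hB k x)
    _ = (A k + B k) / (1 + |x| ^ (k + 2)) := (add_div _ _ _).symm
    _ ≤ max M 1 / (1 + |x| ^ (k + 2)) := by gcongr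

/-- Regularity and decay of the auxiliary functions `f₂` and `f₃`. -/
theorem statement7 (ϕ : ℝ × ℝ → ℝ)
    (hsmooth : ContDiff ℝ (⊤ : ℕ∞) ϕ)
    (hsupp : HasCompactSupport ϕ)
    (hradial : ∀ x y : ℝ × ℝ, x.1 ^ 2 + x.2 ^ 2 = y.1 ^ 2 + y.2 ^ 2 → ϕ x = ϕ y)
    (hnorm : (∫ x : ℝ × ℝ, ϕ x) = 1) :
    ContDiff ℝ 2 (f2 ϕ) ∧ ContDiff ℝ 2 (f3 ϕ) ∧
      ∃ C : ℝ, 0 < C ∧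
        ∀ k : ℕ, k ≤ 2 → ∀ x : ℝ,
          ‖iteratedDeriv k (f2 ϕ) x‖ + ‖iteratedDeriv k (f3 ϕ) x‖
            ≤ C / (1 + |x| ^ (k + 2)) := by
  obtain ⟨hf2, hf3, hdecay⟩ := statement7_general ϕ hsmooth hsupp hradial hnorm 2
  exact ⟨contDiff_infty.1 hf2 2, contDiff_infty.1 hf3 2, hdecay⟩
end
end
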